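/- arXiv:1505.01520 — 14 statements merged into one kernel-verified Lean document; each statement's English description precedes it below -/
import Mathlib

section
/- With the notation of the context, the following identity holds: ∫_a^b P(x,t)·f″(t) dt = τ(x;α,β). -/
open MeasureTheory intervalIntegral

/-- Integral mean of `f` over `[c,d]`. -/
noncomputable def intMean (f : ℝ → ℝ) (c d : ℝ) : ℝ :=
  (1 / (d - c)) * ∫ t in c..d, f t

/-- The functional τ(x; α, β) of the paper (with parameter h). -/
noncomputable def tau (a b h α β : ℝ) (f f' : ℝ → ℝ) (x : ℝ) : ℝ :=
  (1 / (2 * (α + β))) * ((α / (x - a)) * (x - a - h * (b - a) / 2) ^ 2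
      - (β / (b - x)) * (x - b + h * (b - a) / 2) ^ 2) * f' x
  - (1 / (α + β)) * ((α / (x - a)) * (x - a - h * (b - a) / 2)
      - (β / (b - x)) * (x - b + h * (b - a) / 2)) * f x
  - (h * (b - a) / (2 * (α + β))) * ((α / (x - a)) * f a + (β / (b - x)) * f b)
  + (h ^ 2 * (b - a) ^ 2 / (8 * (α + β))) * ((β / (b - x)) * f' b - (α / (x - a)) * f' a)
  + (1 / (α + β)) * (α * intMean f a x + β * intMean f x b)

theorem key_parts (c d m : ℝ) (f f' f'' : ℝ → ℝ) (hcd : c ≤ d)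
    (hfd : ∀ t ∈ Set.Icc c d, HasDerivAt f (f' t) t)
    (hint : IntervalIntegrable f'' volume c d)
    (hac : ∀ t ∈ Set.Icc c d, f' t = f' c + ∫ u in c..t, f'' u) :
    ∫ t in c..d, (t - m) ^ 2 * f'' t =
      (d - m) ^ 2 * f' d - (c - m) ^ 2 * f' c
        - 2 * ((d - m) * f d - (c - m) * f c - ∫ t in c..d, f t) := by
  have hu : Set.uIcc c d = Set.Icc c d := Set.uIcc_of_le hcd
  have hG : AbsolutelyContinuousOnInterval (fun t => f' c + ∫ u in c..t, f'' u) c d :=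
    (contDiffOn_const (c := f' c)).absolutelyContinuousOnInterval.add
      (hint.absolutelyContinuousOnInterval_intervalIntegral (by simp))
  have hP : AbsolutelyContinuousOnInterval (fun t : ℝ => (t - m) ^ 2) c d := by
    apply ContDiffOn.absolutelyContinuousOnInterval
    fun_prop
  have h1 := hP.integral_mul_deriv_eq_deriv_mul hG
  have h2 : ∫ t in c..d, (t - m) ^ 2 * deriv (fun t => f' c + ∫ u in c..t, f'' u) t
      = ∫ t in c..d, (t - m) ^ 2 * f'' t := by
    apply intervalIntegral.integral_congr_ae
    filter_upwards [hint.ae_hasDerivAt_integral] with t ht ht2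
    rw [((ht (Set.uIoc_subset_uIcc ht2) c (by simp)).const_add (f' c)).deriv]
  have h3 : ∫ t in c..d, deriv (fun t : ℝ => (t - m) ^ 2) t * (f' c + ∫ u in c..t, f'' u)
      = 2 * ∫ t in c..d, (t - m) * f' t := by
    rw [← intervalIntegral.integral_const_mul]
    apply intervalIntegral.integral_congr
    intro t ht
    have hd : HasDerivAt (fun t : ℝ => (t - m) ^ 2) (2 * (t - m)) t := by
      simpa using ((hasDerivAt_id t).sub_const m).fun_pow 2
    simp only [hd.deriv]
    rw [← hac t (hu ▸ ht)]
    ring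
  have hf'i : IntervalIntegrable f' volume c d := by
    apply ContinuousOn.intervalIntegrable
    refine hG.continuousOn.congr ?_
    intro t ht
    exact hac t (hu ▸ ht)
  have h4 := intervalIntegral.integral_mul_deriv_eq_deriv_mul (a := c) (b := d)
    (u := fun t => t - m) (u' := fun _ => 1) (v := f) (v' := f')
    (fun t _ => (hasDerivAt_id t).sub_const m) (fun t ht => hfd t (hu ▸ ht))
    (by simp) hf'i
  simp only [one_mul] at h4
  rw [h2, h3, h4, ← hac d ⟨hcd, le_rfl⟩, ← hac c ⟨le_rfl, hcd⟩] at h1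
  exact h1

theorem stmt_0 (a b h α β x : ℝ) (f f' f'' : ℝ → ℝ)
    (hab : a < b)
    (hh : h ∈ Set.Icc (0 : ℝ) 1)
    (hα : 0 ≤ α) (hβ : 0 ≤ β) (hαβ : 0 < α + β)
    (hax : a < x) (hxb : x < b)
    (hx1 : a + h * (b - a) / 2 ≤ x) (hx2 : x ≤ b - h * (b - a) / 2)
    (hfd : ∀ t ∈ Set.Icc a b, HasDerivAt f (f' t) t)
    (hf''int : IntervalIntegrable f'' MeasureTheory.volume a b)
    (hac : ∀ t ∈ Set.Icc a b, f' t = f' a + ∫ u in a..t, f'' u)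
    :
    (∫ t in a..b,
        (if t ≤ x then (α / (2 * (α + β) * (x - a))) * (t - a - h * (b - a) / 2) ^ 2
          else (β / (2 * (α + β) * (b - x))) * (t - b + h * (b - a) / 2) ^ 2) * f'' t)
      = tau a b h α β f f' x := by
  have hi1 : IntervalIntegrable f'' volume a x :=
    hf''int.mono_set (by
      rw [Set.uIcc_of_le hax.le, Set.uIcc_of_le hab.le]; exact Set.Icc_subset_Icc_right hxb.le)
  have hi2 : IntervalIntegrable f'' volume x b :=
    hf''int.mono_set (by
      rw [Set.uIcc_of_le hxb.le, Set.uIcc_of_le hab.le]; exact Set.Icc_subset_Icc_left hax.le)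
  have k1 := key_parts a x (a + h * (b - a) / 2) f f' f'' hax.le
    (fun t ht => hfd t ⟨ht.1, ht.2.trans hxb.le⟩) hi1
    (fun t ht => hac t ⟨ht.1, ht.2.trans hxb.le⟩)
  have k2 := key_parts x b (b - h * (b - a) / 2) f f' f'' hxb.le
    (fun t ht => hfd t ⟨hax.le.trans ht.1, ht.2⟩) hi2
    (fun t ht => by
      rw [hac t ⟨hax.le.trans ht.1, ht.2⟩, hac x ⟨hax.le, hxb.le⟩, add_assoc,
        intervalIntegral.integral_add_adjacent_intervals hi1]
      exact hi2.mono_set (by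
        rw [Set.uIcc_of_le hxb.le, Set.uIcc_of_le ht.1]; exact Set.Icc_subset_Icc_right ht.2))
  set F : ℝ → ℝ := fun t =>
    (if t ≤ x then (α / (2 * (α + β) * (x - a))) * (t - a - h * (b - a) / 2) ^ 2
          else (β / (2 * (α + β) * (b - x))) * (t - b + h * (b - a) / 2) ^ 2) * f'' t with hF
  have e1 : Set.EqOn (fun t => (α / (2 * (α + β) * (x - a))) *
      ((t - (a + h * (b - a) / 2)) ^ 2 * f'' t)) F (Set.uIoc a x) := by
    intro t ht
    rw [Set.uIoc_of_le hax.le] at ht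
    simp only [hF, if_pos ht.2]
    ring
  have e2 : Set.EqOn (fun t => (β / (2 * (α + β) * (b - x))) *
      ((t - (b - h * (b - a) / 2)) ^ 2 * f'' t)) F (Set.uIoc x b) := by
    intro t ht
    rw [Set.uIoc_of_le hxb.le] at ht
    simp only [hF, if_neg (not_le.mpr ht.1)]
    ring
  have j1 : IntervalIntegrable F volume a x :=
    ((hi1.continuousOn_mul (by fun_prop)).const_mul _).congr e1
  have j2 : IntervalIntegrable F volume x b :=
    ((hi2.continuousOn_mul (by fun_prop)).const_mul _).congr e2
  rw [← intervalIntegral.integral_add_adjacent_intervals j1 j2,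
    ← intervalIntegral.integral_congr_ae (Filter.Eventually.of_forall e1),
    ← intervalIntegral.integral_congr_ae (Filter.Eventually.of_forall e2),
    intervalIntegral.integral_const_mul, intervalIntegral.integral_const_mul, k1, k2]
  unfold tau intMean
  have n1 : x - a ≠ 0 := by linarith
  have n2 : b - x ≠ 0 := by linarith
  have n3 : α + β ≠ 0 := hαβ.ne'
  field_simp
  ring
end

section
/- If f″ is essentially bounded on [a,b], then |τ(x;α,β)| ≤ (‖f″‖_∞/(6(α+β)))·[ (α/(x−a))·{(x−a−h(b−a)/2)³ + (h(b−a)/2)³} + (β/(b−x))·{(b−h(b−a)/2−x)³ + (h(b−a)/2)³} ], where ‖f″‖_∞ denotes the essential supremum of |f″| on [a,b]. -/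
open MeasureTheory intervalIntegral

lemma aux_bound (c K p q : ℝ) (f f' : ℝ → ℝ) (hpq : p ≤ q)
    (hfd : ∀ t ∈ Set.Icc p q, HasDerivAt f (f' t) t)
    (hL : ∀ s ∈ Set.Icc p q, ∀ t ∈ Set.Icc p q, |f' t - f' s| ≤ K * |t - s|) (hK : 0 ≤ K) :
    |(q - c) ^ 2 / 2 * f' q - (p - c) ^ 2 / 2 * f' p - (q - c) * f q + (p - c) * f p
      + ∫ t in p..q, f t| ≤ K / 6 * ((q - c) ^ 3 - (p - c) ^ 3) := by
  have hu : Set.uIcc p q = Set.Icc p q := Set.uIcc_of_le hpq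
  have hlip : LipschitzOnWith K.toNNReal f' (Set.uIcc p q) := by
    rw [hu]
    apply LipschitzOnWith.of_dist_le_mul
    intro t ht s hs
    rw [Real.dist_eq, Real.dist_eq, Real.coe_toNNReal K hK]
    exact hL s hs t ht
  have hac := hlip.absolutelyContinuousOnInterval
  have hg : ∀ t, HasDerivAt (fun t : ℝ => (t - c) ^ 2 / 2) (t - c) t := by
    intro t
    have := (((hasDerivAt_id t).sub_const c).pow 2).div_const 2
    exact this.congr_deriv (by simp)
  have hgac : AbsolutelyContinuousOnInterval (fun t : ℝ => (t - c) ^ 2 / 2) p q := by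
    apply ContDiffOn.absolutelyContinuousOnInterval
    fun_prop
  have h1 := hgac.integral_mul_deriv_eq_deriv_mul hac
  have hdg : deriv (fun t : ℝ => (t - c) ^ 2 / 2) = fun t => t - c := funext fun t => (hg t).deriv
  rw [hdg] at h1
  have h2 := intervalIntegral.integral_mul_deriv_eq_deriv_mul (a := p) (b := q)
    (u := fun t => t - c) (v := f) (u' := fun _ => 1) (v' := f')
    (fun t _ => (hasDerivAt_id t).sub_const c) (fun t ht => hfd t (hu ▸ ht))
    (by simp) (hlip.continuousOn.intervalIntegrable)
  simp only [one_mul] at h2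
  have h3 : (q - c) ^ 2 / 2 * f' q - (p - c) ^ 2 / 2 * f' p - (q - c) * f q + (p - c) * f p
      + ∫ t in p..q, f t = ∫ t in p..q, (t - c) ^ 2 / 2 * deriv f' t := by
    rw [h1, h2]; ring
  rw [h3]
  have h4 : ∫ t in p..q, K * ((t - c) ^ 2 / 2) = K / 6 * ((q - c) ^ 3 - (p - c) ^ 3) := by
    have hd : ∀ t ∈ Set.uIcc p q, HasDerivAt (fun t : ℝ => K / 6 * (t - c) ^ 3)
        (K * ((t - c) ^ 2 / 2)) t := by
      intro t _
      have := (((hasDerivAt_id t).sub_const c).pow 3).const_mul (K / 6)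
      exact this.congr_deriv (by simp; ring)
    rw [intervalIntegral.integral_eq_sub_of_hasDerivAt hd
      (by apply Continuous.intervalIntegrable; fun_prop)]
    ring
  rw [← h4, ← Real.norm_eq_abs]
  apply intervalIntegral.norm_integral_le_of_norm_le hpq
  · have hne : ∀ᵐ t : ℝ, t ≠ q := by simp [ae_iff]
    filter_upwards [hne] with t htq ht
    have hn : Set.uIcc p q ∈ nhds t := by
      rw [hu]; exact Icc_mem_nhds ht.1 (lt_of_le_of_ne ht.2 htq)
    have := norm_deriv_le_of_lipschitzOn hn hlip
    rw [Real.coe_toNNReal K hK] at this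
    rw [norm_mul, Real.norm_of_nonneg (by positivity), mul_comm]
    gcongr
  · apply Continuous.intervalIntegrable; fun_prop

theorem stmt_1 (a b h α β x : ℝ) (f f' f'' : ℝ → ℝ)
    (hab : a < b)
    (hh : h ∈ Set.Icc (0 : ℝ) 1)
    (hα : 0 ≤ α) (hβ : 0 ≤ β) (hαβ : 0 < α + β)
    (hax : a < x) (hxb : x < b)
    (hx1 : a + h * (b - a) / 2 ≤ x) (hx2 : x ≤ b - h * (b - a) / 2)
    (hfd : ∀ t ∈ Set.Icc a b, HasDerivAt f (f' t) t)
    (hf''int : IntervalIntegrable f'' MeasureTheory.volume a b)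
    (hac : ∀ t ∈ Set.Icc a b, f' t = f' a + ∫ u in a..t, f'' u)
    (K : ℝ) (hK : ∀ᵐ t ∂MeasureTheory.volume.restrict (Set.Icc a b), |f'' t| ≤ K)
    :
    |tau a b h α β f f' x| ≤
      (K / (6 * (α + β))) *
      ((α / (x - a)) * ((x - a - h * (b - a) / 2) ^ 3 + (h * (b - a) / 2) ^ 3)
        + (β / (b - x)) * ((b - h * (b - a) / 2 - x) ^ 3 + (h * (b - a) / 2) ^ 3)) := by
  have hKr : ∀ᵐ t, t ∈ Set.Icc a b → |f'' t| ≤ K := (ae_restrict_iff' measurableSet_Icc).1 hK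
  have hK0 : 0 ≤ K := by
    have hne : (ae (volume.restrict (Set.Icc a b))).NeBot := by
      rw [ae_neBot, Ne, Measure.restrict_eq_zero]; simp [hab]
    obtain ⟨t, ht⟩ := hK.exists
    exact (abs_nonneg _).trans ht
  have hL : ∀ s ∈ Set.Icc a b, ∀ t ∈ Set.Icc a b, |f' t - f' s| ≤ K * |t - s| := by
    intro s hs t ht
    have hsub : ∀ r ∈ Set.Icc a b, IntervalIntegrable f'' volume a r := by
      intro r hr
      apply hf''int.mono_set
      rw [Set.uIcc_of_le hr.1, Set.uIcc_of_le hab.le]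
      exact Set.Icc_subset_Icc le_rfl hr.2
    rw [hac t ht, hac s hs, add_sub_add_left_eq_sub,
      intervalIntegral.integral_interval_sub_left (hsub t ht) (hsub s hs), ← Real.norm_eq_abs]
    apply intervalIntegral.norm_integral_le_of_norm_le_const_ae
    filter_upwards [hKr] with u hu hmem
    exact hu (Set.uIcc_subset_Icc hs ht (Set.uIoc_subset_uIcc hmem))
  have hA := aux_bound (a + h * (b - a) / 2) K a x f f' hax.le
    (fun t ht => hfd t ⟨ht.1, ht.2.trans hxb.le⟩)
    (fun s hs t ht => hL s ⟨hs.1, hs.2.trans hxb.le⟩ t ⟨ht.1, ht.2.trans hxb.le⟩) hK0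
  have hB := aux_bound (b - h * (b - a) / 2) K x b f f' hxb.le
    (fun t ht => hfd t ⟨hax.le.trans ht.1, ht.2⟩)
    (fun s hs t ht => hL s ⟨hax.le.trans hs.1, hs.2⟩ t ⟨hax.le.trans ht.1, ht.2⟩) hK0
  have hxa : 0 < x - a := sub_pos.2 hax
  have hbx : 0 < b - x := sub_pos.2 hxb
  set A := (x - (a + h * (b - a) / 2)) ^ 2 / 2 * f' x - (a - (a + h * (b - a) / 2)) ^ 2 / 2 * f' a
    - (x - (a + h * (b - a) / 2)) * f x + (a - (a + h * (b - a) / 2)) * f a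
      + ∫ t in a..x, f t with hAdef
  set B := (b - (b - h * (b - a) / 2)) ^ 2 / 2 * f' b - (x - (b - h * (b - a) / 2)) ^ 2 / 2 * f' x
    - (b - (b - h * (b - a) / 2)) * f b + (x - (b - h * (b - a) / 2)) * f x
      + ∫ t in x..b, f t with hBdef
  have htau : tau a b h α β f f' x
      = 1 / (α + β) * (α / (x - a)) * A + 1 / (α + β) * (β / (b - x)) * B := by
    rw [hAdef, hBdef]
    unfold tau intMean
    rw [show 1 / (2 * (α + β)) = 1 / (α + β) / 2 by field_simp,
      show h * (b - a) / (2 * (α + β)) = 1 / (α + β) * (h * (b - a) / 2) by field_simp,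
      show h ^ 2 * (b - a) ^ 2 / (8 * (α + β)) = 1 / (α + β) * (h ^ 2 * (b - a) ^ 2 / 8) by
        field_simp]
    ring
  have hR : K / (6 * (α + β)) = 1 / (α + β) * (K / 6) := by field_simp
  rw [htau, hR]
  have c1 : 0 ≤ 1 / (α + β) * (α / (x - a)) := by positivity
  have c2 : 0 ≤ 1 / (α + β) * (β / (b - x)) := by positivity
  calc _ ≤ 1 / (α + β) * (α / (x - a)) * |A| + 1 / (α + β) * (β / (b - x)) * |B| := by
        refine (abs_add_le _ _).trans ?_
        rw [abs_mul, abs_mul _ B, abs_of_nonneg c1, abs_of_nonneg c2]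
    _ ≤ _ := add_le_add (mul_le_mul_of_nonneg_left hA c1) (mul_le_mul_of_nonneg_left hB c2)
    _ = _ := by ring
end

section
/- If p > 1, 1/p + 1/q = 1, and f″ ∈ L_p[a,b], then |τ(x;α,β)| ≤ (‖f″‖_p/(2·(2q+1)^{1/q}·(α+β)))·[ (α^q/(x−a)^q)·{(x−a−h(b−a)/2)^{2q+1} + (h(b−a)/2)^{2q+1}} + (β^q/(b−x)^q)·{(b−h(b−a)/2−x)^{2q+1} + (h(b−a)/2)^{2q+1}} ]^{1/q}, where ‖f″‖_p = (∫_a^b |f″(t)|^p dt)^{1/p}. -/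
open MeasureTheory intervalIntegral

lemma aux_parts (c d m : ℝ) (f f' f'' : ℝ → ℝ) (hcd : c ≤ d)
    (hfd : ∀ t ∈ Set.Icc c d, HasDerivAt f (f' t) t)
    (hi : IntervalIntegrable f'' volume c d)
    (hac : ∀ t ∈ Set.Icc c d, f' t = f' c + ∫ u in c..t, f'' u) :
    ∫ t in c..d, (t - m) ^ 2 / 2 * f'' t =
      (d - m) ^ 2 / 2 * f' d - (c - m) ^ 2 / 2 * f' c
        - ((d - m) * f d - (c - m) * f c) + ∫ t in c..d, f t := by
  have hu : Set.uIcc c d = Set.Icc c d := Set.uIcc_of_le hcd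
  set G : ℝ → ℝ := fun t => f' c + ∫ u in c..t, f'' u with hG
  have hI := hi.absolutelyContinuousOnInterval_intervalIntegral (c := c) (by simp)
  have hGac : AbsolutelyContinuousOnInterval G c d := by
    have h0 : AbsolutelyContinuousOnInterval (fun _ : ℝ => f' c) c d :=
      ContDiffOn.absolutelyContinuousOnInterval contDiffOn_const
    exact h0.add hI
  have hP : AbsolutelyContinuousOnInterval (fun t : ℝ => (t - m) ^ 2 / 2) c d := by
    apply ContDiffOn.absolutelyContinuousOnInterval
    apply ContDiff.contDiffOn
    fun_prop
  have key := hP.integral_mul_deriv_eq_deriv_mul hGac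
  have e1 : ∫ t in c..d, (t - m) ^ 2 / 2 * f'' t = ∫ t in c..d, (t - m) ^ 2 / 2 * deriv G t := by
    apply intervalIntegral.integral_congr_ae
    filter_upwards [hi.ae_hasDerivAt_integral] with t ht ht2
    have := (ht (Set.uIoc_subset_uIcc ht2) c (by simp)).const_add (f' c)
    rw [this.deriv]
  have e2 : ∫ t in c..d, deriv (fun t : ℝ => (t - m) ^ 2 / 2) t * G t
      = ∫ t in c..d, (t - m) * f' t := by
    apply intervalIntegral.integral_congr
    intro t ht
    rw [hu] at ht
    have hd : HasDerivAt (fun t : ℝ => (t - m) ^ 2 / 2) (t - m) t := by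
      have := (((hasDerivAt_id t).sub_const m).pow 2).div_const 2
      simpa using this
    simp only [hd.deriv, hG, hac t ht]
  have hf'c : ContinuousOn f' (Set.uIcc c d) := by
    refine hGac.continuousOn.congr ?_
    intro t ht
    rw [hu] at ht
    exact hac t ht
  have e3 : ∫ t in c..d, (t - m) * f' t = (d - m) * f d - (c - m) * f c - ∫ t in c..d, 1 * f t := by
    apply intervalIntegral.integral_mul_deriv_eq_deriv_mul
    · intro t _; exact (hasDerivAt_id t).sub_const m
    · intro t ht; rw [hu] at ht; exact hfd t ht
    · simp
    · exact hf'c.intervalIntegrable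
  have hd := hac d ⟨hcd, le_rfl⟩
  rw [e1, key, e2, e3, hd]
  simp [hG]
  ring

lemma aux_int (c d m r : ℝ) (hc : c ≤ m) (hd : m ≤ d) (hr : 0 ≤ r) :
    ∫ t in c..d, |t - m| ^ r = ((d - m) ^ (r + 1) + (m - c) ^ (r + 1)) / (r + 1) := by
  have hcont : Continuous (fun t : ℝ => |t - m| ^ r) :=
    ((continuous_id.sub continuous_const).abs).rpow_const (fun _ => Or.inr hr)
  rw [← intervalIntegral.integral_add_adjacent_intervals (b := m)
    (hcont.intervalIntegrable _ _) (hcont.intervalIntegrable _ _)]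
  have h1 : ∫ t in c..m, |t - m| ^ r = ∫ t in c..m, (fun s => s ^ r) (m - t) := by
    apply intervalIntegral.integral_congr
    intro t ht
    rw [Set.uIcc_of_le hc] at ht
    simp only
    rw [abs_sub_comm, abs_of_nonneg (by linarith [ht.2])]
  have h2 : ∫ t in m..d, |t - m| ^ r = ∫ t in m..d, (fun s => s ^ r) (t - m) := by
    apply intervalIntegral.integral_congr
    intro t ht
    rw [Set.uIcc_of_le hd] at ht
    simp only
    rw [abs_of_nonneg (by linarith [ht.1])]
  rw [h1, h2, intervalIntegral.integral_comp_sub_left (fun s : ℝ => s ^ r),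
    intervalIntegral.integral_comp_sub_right (fun s : ℝ => s ^ r),
    integral_rpow (Or.inl (by linarith)), integral_rpow (Or.inl (by linarith))]
  rw [sub_self, Real.zero_rpow (by linarith)]
  ring

lemma aux_holder (c d m p q : ℝ) (g : ℝ → ℝ) (hc : c ≤ m) (hd : m ≤ d)
    (hpq : p.HolderConjugate q)
    (hi : IntervalIntegrable g volume c d)
    (hLp : IntervalIntegrable (fun t => |g t| ^ p) volume c d) :
    |∫ t in c..d, (t - m) ^ 2 / 2 * g t| ≤
      (∫ t in c..d, |g t| ^ p) ^ (1 / p) *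
        (((d - m) ^ (2 * q + 1) + (m - c) ^ (2 * q + 1)) ^ (1 / q) / (2 * (2 * q + 1) ^ (1 / q))) := by
  have hcd : c ≤ d := hc.trans hd
  have hp0 := hpq.pos
  have hq0 := hpq.symm.pos
  have hnn1 : 0 ≤ d - m := by linarith
  have hnn2 : 0 ≤ m - c := by linarith
  have hmeas : AEStronglyMeasurable g (volume.restrict (Set.Ioc c d)) :=
    (intervalIntegrable_iff_integrableOn_Ioc_of_le hcd).1 hi |>.aestronglyMeasurable
  have hm1 : MemLp g (ENNReal.ofReal p) (volume.restrict (Set.Ioc c d)) := by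
    rw [← integrable_norm_rpow_iff hmeas (by simpa using hp0) (by simp)]
    rw [ENNReal.toReal_ofReal hp0.le]
    exact (intervalIntegrable_iff_integrableOn_Ioc_of_le hcd).1 hLp
  have hcont2 : Continuous (fun t : ℝ => |t - m| ^ (2 * q)) :=
    ((continuous_id.sub continuous_const).abs).rpow_const (fun _ => Or.inr (by positivity))
  have hsq : ∀ t : ℝ, |(t - m) ^ 2| ^ q = |t - m| ^ (2 * q) := by
    intro t
    rw [abs_pow, Real.rpow_mul (abs_nonneg _)]
    norm_num
  have hm2 : MemLp (fun t : ℝ => (t - m) ^ 2) (ENNReal.ofReal q)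
      (volume.restrict (Set.Ioc c d)) := by
    rw [← integrable_norm_rpow_iff (by fun_prop) (by simpa using hq0) (by simp)]
    rw [ENNReal.toReal_ofReal hq0.le]
    simp only [Real.norm_eq_abs, hsq]
    exact (intervalIntegrable_iff_integrableOn_Ioc_of_le hcd).1 (hcont2.intervalIntegrable _ _)
  have H := integral_mul_norm_le_Lp_mul_Lq hpq hm1 hm2
  simp only [Real.norm_eq_abs, hsq] at H
  rw [← intervalIntegral.integral_of_le hcd, ← intervalIntegral.integral_of_le hcd,
    ← intervalIntegral.integral_of_le hcd, aux_int c d m (2 * q) hc hd (by positivity),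
    Real.div_rpow (by positivity) (by positivity)] at H
  have h1 : |∫ t in c..d, (t - m) ^ 2 / 2 * g t| ≤ ∫ t in c..d, |(t - m) ^ 2 / 2 * g t| :=
    intervalIntegral.abs_integral_le_integral_abs hcd
  have h2 : ∫ t in c..d, |(t - m) ^ 2 / 2 * g t|
      = (1 / 2) * ∫ t in c..d, |g t| * |(t - m) ^ 2| := by
    rw [← intervalIntegral.integral_const_mul]
    congr 1
    ext t
    rw [abs_mul, abs_div, abs_two]
    ring
  rw [h2] at h1
  refine h1.trans ?_
  calc _ ≤ (1 / 2) * _ := mul_le_mul_of_nonneg_left H (by norm_num)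
    _ = _ := by ring

lemma aux_sum (p q F1 F2 E1 E2 : ℝ) (hpq : p.HolderConjugate q) (hF1 : 0 ≤ F1) (hF2 : 0 ≤ F2)
    (hE1 : 0 ≤ E1) (hE2 : 0 ≤ E2) :
    F1 ^ (1 / p) * E1 ^ (1 / q) + F2 ^ (1 / p) * E2 ^ (1 / q) ≤
      (F1 + F2) ^ (1 / p) * (E1 + E2) ^ (1 / q) := by
  have hp0 := hpq.pos
  have hq0 := hpq.symm.pos
  have H := Real.inner_le_Lp_mul_Lq_of_nonneg (Finset.univ : Finset (Fin 2)) hpq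
    (f := ![F1 ^ (1 / p), F2 ^ (1 / p)]) (g := ![E1 ^ (1 / q), E2 ^ (1 / q)])
    (by intro i _; fin_cases i <;> simp <;> positivity)
    (by intro i _; fin_cases i <;> simp <;> positivity)
  have s : ∀ y r : ℝ, 0 ≤ y → 0 < r → (y ^ (1 / r)) ^ r = y := by
    intro y r hy hr
    rw [← Real.rpow_mul hy, one_div, inv_mul_cancel₀ hr.ne', Real.rpow_one]
  simp only [Fin.sum_univ_two, Matrix.cons_val_zero, Matrix.cons_val_one] at H
  rwa [s _ _ hF1 hp0, s _ _ hF2 hp0, s _ _ hE1 hq0, s _ _ hE2 hq0] at H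

theorem stmt_2 (a b h α β x p q : ℝ) (f f' f'' : ℝ → ℝ)
    (hab : a < b)
    (hh : h ∈ Set.Icc (0 : ℝ) 1)
    (hα : 0 ≤ α) (hβ : 0 ≤ β) (hαβ : 0 < α + β)
    (hax : a < x) (hxb : x < b)
    (hx1 : a + h * (b - a) / 2 ≤ x) (hx2 : x ≤ b - h * (b - a) / 2)
    (hfd : ∀ t ∈ Set.Icc a b, HasDerivAt f (f' t) t)
    (hf''int : IntervalIntegrable f'' MeasureTheory.volume a b)
    (hac : ∀ t ∈ Set.Icc a b, f' t = f' a + ∫ u in a..t, f'' u)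
    (hp : 1 < p) (hpq : 1 / p + 1 / q = 1)
    (hLp : IntervalIntegrable (fun t => |f'' t| ^ p) MeasureTheory.volume a b)
    :
    |tau a b h α β f f' x| ≤
      ((∫ t in a..b, |f'' t| ^ p) ^ (1 / p) / (2 * (2 * q + 1) ^ (1 / q) * (α + β))) *
      ((α ^ q / (x - a) ^ q) *
          ((x - a - h * (b - a) / 2) ^ (2 * q + 1) + (h * (b - a) / 2) ^ (2 * q + 1))
        + (β ^ q / (b - x) ^ q) *
          ((b - h * (b - a) / 2 - x) ^ (2 * q + 1) + (h * (b - a) / 2) ^ (2 * q + 1))) ^ (1 / q) := by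
  have hp0 : 0 < p := by linarith
  have hq : p.HolderConjugate q := by
    rw [Real.holderConjugate_iff]
    exact ⟨hp, by simpa [one_div] using hpq⟩
  have hq0 := hq.symm.pos
  obtain ⟨hh0, hh1⟩ := hh
  have hba : 0 < b - a := by linarith
  have hw : 0 ≤ h * (b - a) / 2 := by positivity
  have hsub1 : Set.uIcc a x ⊆ Set.uIcc a b := by
    rw [Set.uIcc_of_le hax.le, Set.uIcc_of_le hab.le]; exact Set.Icc_subset_Icc_right hxb.le
  have hsub2 : Set.uIcc x b ⊆ Set.uIcc a b := by
    rw [Set.uIcc_of_le hxb.le, Set.uIcc_of_le hab.le]; exact Set.Icc_subset_Icc_left hax.le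
  have hi1 := hf''int.mono_set hsub1
  have hi2 := hf''int.mono_set hsub2
  have hL1 := hLp.mono_set hsub1
  have hL2 := hLp.mono_set hsub2
  have P1 := aux_parts a x (a + h * (b - a) / 2) f f' f'' hax.le
    (fun t ht => hfd t ⟨ht.1, ht.2.trans hxb.le⟩) hi1
    (fun t ht => hac t ⟨ht.1, ht.2.trans hxb.le⟩)
  have P2 := aux_parts x b (b - h * (b - a) / 2) f f' f'' hxb.le
    (fun t ht => hfd t ⟨hax.le.trans ht.1, ht.2⟩) hi2
    (by
      intro t ht
      rw [hac t ⟨hax.le.trans ht.1, ht.2⟩, hac x ⟨hax.le, hxb.le⟩, add_assoc,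
        intervalIntegral.integral_add_adjacent_intervals hi1]
      refine hi2.mono_set ?_
      rw [Set.uIcc_of_le ht.1, Set.uIcc_of_le hxb.le]
      exact Set.Icc_subset_Icc_right ht.2)
  have H1 := aux_holder a x (a + h * (b - a) / 2) p q f'' (by linarith) hx1 hq hi1 hL1
  have H2 := aux_holder x b (b - h * (b - a) / 2) p q f'' hx2 (by linarith) hq hi2 hL2
  rw [show x - (a + h * (b - a) / 2) = x - a - h * (b - a) / 2 by ring,
    show a + h * (b - a) / 2 - a = h * (b - a) / 2 by ring] at H1
  rw [show b - (b - h * (b - a) / 2) = h * (b - a) / 2 by ring, add_comm ((h * (b - a) / 2) ^ _)] at H2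
  have hxa : 0 < x - a := by linarith
  have hbx : 0 < b - x := by linarith
  have hn1 : 0 ≤ x - a - h * (b - a) / 2 := by linarith
  have hn2 : 0 ≤ b - h * (b - a) / 2 - x := by linarith
  set w := h * (b - a) / 2 with hwdef
  set I1 := ∫ t in a..x, (t - (a + w)) ^ 2 / 2 * f'' t with hI1
  set I2 := ∫ t in x..b, (t - (b - w)) ^ 2 / 2 * f'' t with hI2
  have htau : tau a b h α β f f' x = (1 / (α + β)) * (α / (x - a) * I1 + β / (b - x) * I2) := by
    rw [P1, P2]
    unfold tau intMean
    rw [← hwdef, show h ^ 2 * (b - a) ^ 2 / (8 * (α + β)) = (1 / (α + β)) * (w ^ 2 / 2) by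
      rw [hwdef]; field_simp; norm_num,
      show h * (b - a) / (2 * (α + β)) = (1 / (α + β)) * w by rw [hwdef]; field_simp]
    rw [show 1 / (2 * (α + β)) = (1 / (α + β)) * (1 / 2) by field_simp]
    ring
  set S1 := (x - a - w) ^ (2 * q + 1) + w ^ (2 * q + 1)
  set S2 := (b - w - x) ^ (2 * q + 1) + w ^ (2 * q + 1)
  have hS1 : 0 ≤ S1 := by positivity
  have hS2 : 0 ≤ S2 := by positivity
  have hsplit := intervalIntegral.integral_add_adjacent_intervals hL1 hL2
  set F1 := ∫ t in a..x, |f'' t| ^ p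
  set F2 := ∫ t in x..b, |f'' t| ^ p
  have hF1 : 0 ≤ F1 := intervalIntegral.integral_nonneg hax.le (fun t _ => by positivity)
  have hF2 : 0 ≤ F2 := intervalIntegral.integral_nonneg hxb.le (fun t _ => by positivity)
  have hk1 : 0 ≤ α / (x - a) := by positivity
  have hk2 : 0 ≤ β / (b - x) := by positivity
  rw [← hsplit, ← Real.div_rpow hα hxa.le, ← Real.div_rpow hβ hbx.le, htau]
  set k1 := α / (x - a)
  set k2 := β / (b - x)
  have hE : ∀ k S : ℝ, 0 ≤ k → 0 ≤ S → (k ^ q * S) ^ (1 / q) = k * S ^ (1 / q) := by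
    intro k S hk hS
    rw [Real.mul_rpow (by positivity) hS, ← Real.rpow_mul hk, mul_one_div_cancel hq0.ne',
      Real.rpow_one]
  have HS := aux_sum p q F1 F2 (k1 ^ q * S1) (k2 ^ q * S2) hq hF1 hF2 (by positivity) (by positivity)
  rw [hE k1 S1 hk1 hS1, hE k2 S2 hk2 hS2] at HS
  have hD : 0 < (2 * q + 1) ^ (1 / q) := by positivity
  set D := (2 * q + 1) ^ (1 / q)
  rw [abs_mul, abs_of_pos (by positivity : 0 < 1 / (α + β))]
  have T : |k1 * I1 + k2 * I2| ≤ k1 * |I1| + k2 * |I2| := by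
    refine (abs_add_le _ _).trans_eq ?_
    rw [abs_mul, abs_mul, abs_of_nonneg hk1, abs_of_nonneg hk2]
  calc 1 / (α + β) * |k1 * I1 + k2 * I2|
      ≤ 1 / (α + β) * (k1 * (F1 ^ (1 / p) * (S1 ^ (1 / q) / (2 * D)))
          + k2 * (F2 ^ (1 / p) * (S2 ^ (1 / q) / (2 * D)))) := by
        refine mul_le_mul_of_nonneg_left (T.trans ?_) (by positivity)
        exact add_le_add (mul_le_mul_of_nonneg_left H1 hk1) (mul_le_mul_of_nonneg_left H2 hk2)
    _ = 1 / (2 * D * (α + β)) * (F1 ^ (1 / p) * (k1 * S1 ^ (1 / q))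
          + F2 ^ (1 / p) * (k2 * S2 ^ (1 / q))) := by
        field_simp
    _ ≤ 1 / (2 * D * (α + β)) * ((F1 + F2) ^ (1 / p) * (k1 ^ q * S1 + k2 ^ q * S2) ^ (1 / q)) :=
        mul_le_mul_of_nonneg_left HS (by positivity)
    _ = _ := by ring
end

section
/- If f″ is essentially bounded on [a,b], then |τ₀(x;α,β)| ≤ [α(x−a)² + β(b−x)²]·‖f″‖_∞/(6(α+β)), where ‖f″‖_∞ denotes the essential supremum of |f″| on [a,b]. -/
open MeasureTheory intervalIntegral

/-- The functional τ₀(x; α, β) (the case h = 0). -/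
noncomputable def tau0 (a b α β : ℝ) (f f' : ℝ → ℝ) (x : ℝ) : ℝ :=
  (1 / (2 * (α + β))) * (α * (x - a) - β * (b - x)) * f' x - f x
  + (1 / (α + β)) * (α * intMean f a x + β * intMean f x b)

theorem aux_taylor (a b x K : ℝ) (f f' : ℝ → ℝ) (hx : x ∈ Set.Icc a b)
    (hfd : ∀ t ∈ Set.Icc a b, HasDerivAt f (f' t) t)
    (hL : ∀ s ∈ Set.Icc a b, ∀ t ∈ Set.Icc a b, s ≤ t → |f' t - f' s| ≤ K * (t - s))
    (t : ℝ) (ht : t ∈ Set.Icc a b) :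
    |f t - f x - f' x * (t - x)| ≤ K * (t - x) ^ 2 / 2 := by
  have key : ∀ e : ℝ, ∀ u ∈ Set.Icc a b,
      HasDerivAt (fun t => K * (t - x) ^ 2 / 2 + e * (f t - f x - f' x * (t - x)))
        (K * (u - x) + e * (f' u - f' x)) u := by
    intro e u hu
    have h1 : HasDerivAt (fun t : ℝ => t - x) 1 u := (hasDerivAt_id u).sub_const x
    have h2 := ((((h1.pow 2).const_mul K).div_const 2)).add
      ((((hfd u hu).sub_const (f x)).sub (h1.const_mul (f' x))).const_mul e)
    refine h2.congr_deriv ?_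
    push_cast
    ring
  have main : ∀ e : ℝ, |e| ≤ 1 →
      0 ≤ K * (t - x) ^ 2 / 2 + e * (f t - f x - f' x * (t - x)) := by
    intro e he
    have hprod : ∀ y : ℝ, |e * y| ≤ |y| := fun y => by
      rw [abs_mul]; exact mul_le_of_le_one_left (abs_nonneg _) he
    rcases lt_trichotomy t x with h | h | h
    · have hs : ∀ u ∈ Set.Icc t x, u ∈ Set.Icc a b := fun u hu =>
        ⟨ht.1.trans hu.1, hu.2.trans hx.2⟩
      obtain ⟨c, hc, hce⟩ := exists_hasDerivAt_eq_slope _ _ h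
        (fun u hu => (key e u (hs u hu)).continuousAt.continuousWithinAt)
        (fun u hu => key e u (hs u ⟨hu.1.le, hu.2.le⟩))
      have hb := hL c (hs c ⟨hc.1.le, hc.2.le⟩) x hx hc.2.le
      have hb2 := (abs_le.1 ((hprod _).trans hb)).1
      rw [eq_div_iff (by linarith)] at hce
      nlinarith [hc.1, hc.2]
    · subst h; simp
    · have hs : ∀ u ∈ Set.Icc x t, u ∈ Set.Icc a b := fun u hu =>
        ⟨hx.1.trans hu.1, hu.2.trans ht.2⟩
      obtain ⟨c, hc, hce⟩ := exists_hasDerivAt_eq_slope _ _ h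
        (fun u hu => (key e u (hs u hu)).continuousAt.continuousWithinAt)
        (fun u hu => key e u (hs u ⟨hu.1.le, hu.2.le⟩))
      have hb := hL x hx c (hs c ⟨hc.1.le, hc.2.le⟩) hc.1.le
      have hb2 := (abs_le.1 ((hprod _).trans hb)).1
      rw [eq_div_iff (by linarith)] at hce
      nlinarith [hc.1, hc.2]
  have h1 := main 1 (by simp)
  have h2 := main (-1) (by simp)
  rw [abs_le]; constructor <;> linarith

theorem aux_int_s4 (c d x K : ℝ) (f : ℝ → ℝ) (m : ℝ) (hcd : c ≤ d)
    (hc : ContinuousOn f (Set.Icc c d))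
    (hT : ∀ t ∈ Set.Icc c d, |f t - f x - m * (t - x)| ≤ K * (t - x) ^ 2 / 2) :
    |(∫ t in c..d, f t) - f x * (d - c) - m * ((d - x) ^ 2 - (c - x) ^ 2) / 2|
      ≤ K * ((d - x) ^ 3 - (c - x) ^ 3) / 6 := by
  have hfi : IntervalIntegrable f volume c d := by
    apply ContinuousOn.intervalIntegrable; rwa [Set.uIcc_of_le hcd]
  have h1 : (∫ t in c..d, (f t - f x - m * (t - x)))
      = (∫ t in c..d, f t) - f x * (d - c) - m * ((d - x) ^ 2 - (c - x) ^ 2) / 2 := by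
    rw [intervalIntegral.integral_sub (hfi.sub (by simp))
      (Continuous.intervalIntegrable (by fun_prop) _ _),
      intervalIntegral.integral_sub hfi (by simp)]
    have : (∫ t in c..d, m * (t - x)) = m * ((d - x) ^ 2 - (c - x) ^ 2) / 2 := by
      rw [intervalIntegral.integral_const_mul,
        intervalIntegral.integral_comp_sub_right (fun t => t) x, integral_id]
      ring
    rw [this]; simp; ring
  have h2 : (∫ t in c..d, K * (t - x) ^ 2 / 2) = K * ((d - x) ^ 3 - (c - x) ^ 3) / 6 := by
    rw [intervalIntegral.integral_div, intervalIntegral.integral_const_mul,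
      intervalIntegral.integral_comp_sub_right (fun t => t ^ 2) x, integral_pow]
    norm_num
    ring
  rw [← h1, ← h2, ← Real.norm_eq_abs]
  apply intervalIntegral.norm_integral_le_of_norm_le hcd
  · exact Filter.Eventually.of_forall fun t ht => hT t ⟨ht.1.le, ht.2⟩
  · exact Continuous.intervalIntegrable (by fun_prop) _ _

theorem stmt_4 (a b α β x : ℝ) (f f' f'' : ℝ → ℝ)
    (hab : a < b)
    (hα : 0 ≤ α) (hβ : 0 ≤ β) (hαβ : 0 < α + β)
    (hax : a < x) (hxb : x < b)
    (hfd : ∀ t ∈ Set.Icc a b, HasDerivAt f (f' t) t)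
    (hf''int : IntervalIntegrable f'' MeasureTheory.volume a b)
    (hac : ∀ t ∈ Set.Icc a b, f' t = f' a + ∫ u in a..t, f'' u)
    (K : ℝ) (hK : ∀ᵐ t ∂MeasureTheory.volume.restrict (Set.Icc a b), |f'' t| ≤ K)
    :
    |tau0 a b α β f f' x| ≤
      (α * (x - a) ^ 2 + β * (b - x) ^ 2) * K / (6 * (α + β)) := by
  have hL : ∀ s ∈ Set.Icc a b, ∀ t ∈ Set.Icc a b, s ≤ t → |f' t - f' s| ≤ K * (t - s) := by
    intro s hs t ht hst
    have hsub : ∀ u ∈ Set.Icc a b, IntervalIntegrable f'' volume a u := fun u hu =>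
      hf''int.mono_set (by
        rw [Set.uIcc_of_le hab.le, Set.uIcc_of_le hu.1]; exact Set.Icc_subset_Icc_right hu.2)
    have he : f' t - f' s = ∫ u in s..t, f'' u := by
      rw [hac t ht, hac s hs, ← intervalIntegral.integral_interval_sub_left (hsub t ht) (hsub s hs)]
      ring
    rw [he, ← Real.norm_eq_abs]
    have := intervalIntegral.norm_integral_le_of_norm_le (f := f'') (g := fun _ => K)
      (μ := volume) hst (by
        filter_upwards [(ae_restrict_iff' measurableSet_Icc).1 hK] with u hu hu2
        exact hu ⟨hs.1.trans hu2.1.le, hu2.2.trans ht.2⟩) (by simp)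
    refine this.trans (le_of_eq ?_)
    simp; ring
  have hx : x ∈ Set.Icc a b := ⟨hax.le, hxb.le⟩
  have hT := aux_taylor a b x K f f' hx hfd hL
  have hcont : ContinuousOn f (Set.Icc a b) := fun u hu =>
    (hfd u hu).continuousAt.continuousWithinAt
  have s1 : Set.Icc a x ⊆ Set.Icc a b := Set.Icc_subset_Icc_right hxb.le
  have s2 : Set.Icc x b ⊆ Set.Icc a b := Set.Icc_subset_Icc_left hax.le
  have i1 := aux_int_s4 a x x K f (f' x) hax.le (hcont.mono s1) (fun t ht => hT t (s1 ht))
  have i2 := aux_int_s4 x b x K f (f' x) hxb.le (hcont.mono s2) (fun t ht => hT t (s2 ht))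
  have p1 : 0 < x - a := sub_pos.2 hax
  have p2 : 0 < b - x := sub_pos.2 hxb
  have j1 : |intMean f a x - f x + f' x * (x - a) / 2| ≤ K * (x - a) ^ 2 / 6 := by
    have : intMean f a x - f x + f' x * (x - a) / 2 =
      ((∫ t in a..x, f t) - f x * (x - a) - f' x * ((x - x) ^ 2 - (a - x) ^ 2) / 2) / (x - a) := by
      unfold intMean; field_simp; ring
    rw [this, abs_div, abs_of_pos p1, div_le_iff₀ p1]
    refine i1.trans (le_of_eq ?_)
    ring
  have j2 : |intMean f x b - f x - f' x * (b - x) / 2| ≤ K * (b - x) ^ 2 / 6 := by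
    have : intMean f x b - f x - f' x * (b - x) / 2 =
      ((∫ t in x..b, f t) - f x * (b - x) - f' x * ((b - x) ^ 2 - (x - x) ^ 2) / 2) / (b - x) := by
      unfold intMean; field_simp; ring
    rw [this, abs_div, abs_of_pos p2, div_le_iff₀ p2]
    refine i2.trans (le_of_eq ?_)
    ring
  have hτ : tau0 a b α β f f' x = (α * (intMean f a x - f x + f' x * (x - a) / 2)
      + β * (intMean f x b - f x - f' x * (b - x) / 2)) / (α + β) := by
    unfold tau0; field_simp; ring
  rw [hτ, abs_div, abs_of_pos hαβ, div_le_iff₀ hαβ]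
  have hR : (α * (x - a) ^ 2 + β * (b - x) ^ 2) * K / (6 * (α + β)) * (α + β)
      = α * (K * (x - a) ^ 2 / 6) + β * (K * (b - x) ^ 2 / 6) := by
    field_simp
  rw [hR]
  refine (abs_add_le _ _).trans ?_
  rw [abs_mul, abs_mul, abs_of_nonneg hα, abs_of_nonneg hβ]
  gcongr
end

section
/- If p > 1, 1/p + 1/q = 1, and f″ ∈ L_p[a,b], then |τ₀(x;α,β)| ≤ (1/(2q+1)^{1/q})·[α^q(x−a)^{q+1} + β^q(b−x)^{q+1}]^{1/q}·‖f″‖_p/(2(α+β)), where ‖f″‖_p = (∫_a^b |f″(t)|^p dt)^{1/p}. -/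
open MeasureTheory intervalIntegral

lemma parts_aux (a c d e : ℝ) (f f' f'' : ℝ → ℝ) (hac' : a ≤ c) (hcd : c < d)
    (hfd : ∀ t ∈ Set.Icc c d, HasDerivAt f (f' t) t)
    (hi : IntervalIntegrable f'' volume a d)
    (hac : ∀ t ∈ Set.Icc a d, f' t = f' a + ∫ u in a..t, f'' u) :
    ∫ t in c..d, (t - e) ^ 2 * f'' t = (d - e) ^ 2 * f' d - (c - e) ^ 2 * f' c
      - 2 * ((d - e) * f d - (c - e) * f c - ∫ t in c..d, f t) := by
  have hi' : IntervalIntegrable f'' volume c d :=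
    hi.mono_set (by rw [Set.uIcc_of_le hcd.le, Set.uIcc_of_le (by linarith)]; exact Set.Icc_subset_Icc_left hac')
  have hi1 : IntervalIntegrable f'' volume a c :=
    hi.mono_set (by rw [Set.uIcc_of_le hac', Set.uIcc_of_le (by linarith)]; exact Set.Icc_subset_Icc_right hcd.le)
  have hf' : ∀ t ∈ Set.Icc c d, f' t = f' c + ∫ u in c..t, f'' u := by
    intro t ht
    rw [hac t ⟨hac'.trans ht.1, ht.2⟩, hac c ⟨hac', hcd.le⟩, add_assoc,
      intervalIntegral.integral_add_adjacent_intervals hi1]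
    exact hi'.mono_set (by rw [Set.uIcc_of_le hcd.le, Set.uIcc_of_le ht.1]; exact Set.Icc_subset_Icc_right ht.2)
  have hG := hi'.absolutelyContinuousOnInterval_intervalIntegral (c := c) (by simp)
  have hcont : ContinuousOn f' (Set.uIcc c d) := by
    refine ((continuousOn_const (c := f' c)).add hG.continuousOn).congr ?_
    intro t ht
    rw [Set.uIcc_of_le hcd.le] at ht
    exact hf' t ht
  have hsq : AbsolutelyContinuousOnInterval (fun t : ℝ => (t - e) ^ 2) c d := by
    apply ContDiffOn.absolutelyContinuousOnInterval
    fun_prop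
  have h1 := hsq.integral_mul_deriv_eq_deriv_mul hG
  have h2 : ∫ t in c..d, (t - e) ^ 2 * deriv (fun x => ∫ u in c..x, f'' u) t
      = ∫ t in c..d, (t - e) ^ 2 * f'' t := by
    apply intervalIntegral.integral_congr_ae
    filter_upwards [hi'.ae_hasDerivAt_integral] with t ht htm
    rw [(ht (Set.uIoc_subset_uIcc htm) c (by simp)).deriv]
  have hd : ∀ t : ℝ, HasDerivAt (fun t : ℝ => (t - e) ^ 2) (2 * (t - e)) t := by
    intro t
    have h := ((hasDerivAt_id t).sub_const e).fun_pow 2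
    simpa using h
  have h3 : ∫ t in c..d, deriv (fun t : ℝ => (t - e) ^ 2) t * (∫ u in c..t, f'' u)
      = ∫ t in c..d, (2 * ((t - e) * f' t) - f' c * (2 * (t - e))) := by
    apply intervalIntegral.integral_congr
    intro t ht
    rw [Set.uIcc_of_le hcd.le] at ht
    simp only [(hd t).deriv]
    rw [hf' t ht]; ring
  have h4 : ∫ t in c..d, (2 * (t - e)) = (d - e) ^ 2 - (c - e) ^ 2 :=
    intervalIntegral.integral_eq_sub_of_hasDerivAt (fun t _ => hd t)
      (Continuous.intervalIntegrable (by fun_prop) _ _)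
  have h5 : ∫ t in c..d, (t - e) * f' t = (d - e) * f d - (c - e) * f c - ∫ t in c..d, 1 * f t := by
    apply intervalIntegral.integral_mul_deriv_eq_deriv_mul (u' := fun _ => (1 : ℝ))
    · intro t _
      exact (hasDerivAt_id t).sub_const e
    · rwa [Set.uIcc_of_le hcd.le]
    · simp
    · exact hcont.intervalIntegrable
  rw [intervalIntegral.integral_sub, intervalIntegral.integral_const_mul,
    intervalIntegral.integral_const_mul, h4, h5] at h3
  · rw [h2, h3] at h1
    rw [h1, hf' d ⟨hcd.le, le_rfl⟩]
    simp only [one_mul, intervalIntegral.integral_same]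
    ring
  · apply ContinuousOn.intervalIntegrable
    fun_prop
  · apply ContinuousOn.intervalIntegrable
    fun_prop

lemma holder_aux (c d e γ p q : ℝ) (g : ℝ → ℝ) (hcd : c < d) (hγ : 0 ≤ γ)
    (he : e = c ∨ e = d) (hpq : p.HolderConjugate q)
    (hi : IntervalIntegrable g volume c d)
    (hLp : IntervalIntegrable (fun t => |g t| ^ p) volume c d) :
    |γ / (d - c) * ∫ t in c..d, (t - e) ^ 2 * g t| ≤
      (γ ^ q * (d - c) ^ (q + 1) / (2 * q + 1)) ^ (1 / q) * (∫ t in c..d, |g t| ^ p) ^ (1 / p) := by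
  have hp0 := hpq.pos
  have hq0 := hpq.symm.pos
  have hL : 0 < d - c := sub_pos.2 hcd
  have key : ∫ t in c..d, (|t - e| ^ 2) ^ q = (d - c) ^ (2 * q + 1) / (2 * q + 1) := by
    have e1 : ∀ t : ℝ, (|t - e| ^ 2) ^ q = |t - e| ^ (2 * q) := by
      intro t
      rw [Real.rpow_mul (abs_nonneg _)]; norm_num
    simp_rw [e1]
    rcases he with rfl | rfl
    · rw [intervalIntegral.integral_comp_sub_right (fun t => |t| ^ (2 * q)) e, sub_self]
      rw [intervalIntegral.integral_congr (g := fun t => t ^ (2 * q)), integral_rpow (Or.inl (by linarith)),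
        Real.zero_rpow (by linarith), sub_zero]
      intro t ht
      rw [Set.uIcc_of_le hL.le] at ht
      simp only [abs_of_nonneg ht.1]
    · simp_rw [abs_sub_comm _ e]
      rw [intervalIntegral.integral_comp_sub_left (fun t => |t| ^ (2 * q)) e, sub_self]
      rw [intervalIntegral.integral_congr (g := fun t => t ^ (2 * q)), integral_rpow (Or.inl (by linarith)),
        Real.zero_rpow (by linarith), sub_zero]
      intro t ht
      rw [Set.uIcc_of_le hL.le] at ht
      simp only [abs_of_nonneg ht.1]
  have hm1 : MemLp g (ENNReal.ofReal p) (volume.restrict (Set.Ioc c d)) := by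
    have hg := ((intervalIntegrable_iff_integrableOn_Ioc_of_le hcd.le).1 hi).aestronglyMeasurable
    rw [← integrable_norm_rpow_iff hg (by simpa using hp0) (by simp), ENNReal.toReal_ofReal hp0.le]
    exact (intervalIntegrable_iff_integrableOn_Ioc_of_le hcd.le).1 hLp
  have hm2 : MemLp (fun t : ℝ => (t - e) ^ 2) (ENNReal.ofReal q) (volume.restrict (Set.Ioc c d)) := by
    apply MemLp.of_bound (Continuous.aestronglyMeasurable (by fun_prop)) ((d - c) ^ 2)
    filter_upwards [ae_restrict_mem measurableSet_Ioc] with t ht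
    rw [Real.norm_of_nonneg (sq_nonneg _)]
    rcases he with rfl | rfl <;> nlinarith [ht.1, ht.2]
  have hH := integral_mul_norm_le_Lp_mul_Lq hpq hm1 hm2
  simp only [Real.norm_eq_abs, abs_pow] at hH
  rw [← intervalIntegral.integral_of_le hcd.le, ← intervalIntegral.integral_of_le hcd.le,
    ← intervalIntegral.integral_of_le hcd.le, key] at hH
  have hab : |∫ t in c..d, (t - e) ^ 2 * g t| ≤ ∫ t in c..d, |g t| * |t - e| ^ 2 := by
    refine (intervalIntegral.abs_integral_le_integral_abs hcd.le).trans_eq ?_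
    congr 1; ext t
    rw [abs_mul, abs_pow, mul_comm]
  have hc : (γ ^ q * (d - c) ^ (q + 1) / (2 * q + 1)) ^ (1 / q)
      = γ / (d - c) * ((d - c) ^ (2 * q + 1) / (2 * q + 1)) ^ (1 / q) := by
    have : γ ^ q * (d - c) ^ (q + 1) / (2 * q + 1)
        = (γ / (d - c)) ^ q * ((d - c) ^ (2 * q + 1) / (2 * q + 1)) := by
      rw [Real.div_rpow hγ hL.le, show 2 * q + 1 = q + (q + 1) by ring,
        Real.rpow_add hL q (q + 1)]
      have : (d - c) ^ q ≠ 0 := (Real.rpow_pos_of_pos hL q).ne'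
      field_simp
    rw [this, Real.mul_rpow (by positivity) (by positivity), ← Real.rpow_mul (by positivity),
      mul_one_div_cancel hq0.ne', Real.rpow_one]
  rw [hc, abs_mul, abs_of_nonneg (by positivity : 0 ≤ γ / (d - c)), mul_assoc]
  apply mul_le_mul_of_nonneg_left _ (by positivity)
  rw [mul_comm]
  exact hab.trans hH

theorem stmt_5 (a b α β x p q : ℝ) (f f' f'' : ℝ → ℝ)
    (hab : a < b)
    (hα : 0 ≤ α) (hβ : 0 ≤ β) (hαβ : 0 < α + β)
    (hax : a < x) (hxb : x < b)
    (hfd : ∀ t ∈ Set.Icc a b, HasDerivAt f (f' t) t)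
    (hf''int : IntervalIntegrable f'' MeasureTheory.volume a b)
    (hac : ∀ t ∈ Set.Icc a b, f' t = f' a + ∫ u in a..t, f'' u)
    (hp : 1 < p) (hpq : 1 / p + 1 / q = 1)
    (hLp : IntervalIntegrable (fun t => |f'' t| ^ p) MeasureTheory.volume a b)
    :
    |tau0 a b α β f f' x| ≤
      (1 / (2 * q + 1) ^ (1 / q)) *
        (α ^ q * (x - a) ^ (q + 1) + β ^ q * (b - x) ^ (q + 1)) ^ (1 / q) *
        (∫ t in a..b, |f'' t| ^ p) ^ (1 / p) / (2 * (α + β)) := by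
  have hp0 : 0 < p := by linarith
  have hq : p.HolderConjugate q := by
    rw [Real.holderConjugate_iff]; exact ⟨hp, by simpa using hpq⟩
  have hq0 := hq.symm.pos
  have hxa : 0 < x - a := sub_pos.2 hax
  have hbx : 0 < b - x := sub_pos.2 hxb
  have s1 : Set.uIcc a x ⊆ Set.uIcc a b := by
    rw [Set.uIcc_of_le hax.le, Set.uIcc_of_le hab.le]; exact Set.Icc_subset_Icc_right hxb.le
  have s2 : Set.uIcc x b ⊆ Set.uIcc a b := by
    rw [Set.uIcc_of_le hxb.le, Set.uIcc_of_le hab.le]; exact Set.Icc_subset_Icc_left hax.le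
  have P1 := parts_aux a a x a f f' f'' le_rfl hax
    (fun t ht => hfd t ⟨ht.1, ht.2.trans hxb.le⟩) (hf''int.mono_set s1)
    (fun t ht => hac t ⟨ht.1, ht.2.trans hxb.le⟩)
  have P2 := parts_aux a x b b f f' f'' hax.le hxb
    (fun t ht => hfd t ⟨hax.le.trans ht.1, ht.2⟩) hf''int hac
  have H1 := holder_aux a x a α p q f'' hax hα (Or.inl rfl) hq (hf''int.mono_set s1) (hLp.mono_set s1)
  have H2 := holder_aux x b b β p q f'' hxb hβ (Or.inr rfl) hq (hf''int.mono_set s2) (hLp.mono_set s2)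
  have hadd := intervalIntegral.integral_add_adjacent_intervals (hLp.mono_set s1) (hLp.mono_set s2)
  have n1 : 0 ≤ ∫ t in a..x, |f'' t| ^ p :=
    intervalIntegral.integral_nonneg hax.le fun t _ => by positivity
  have n2 : 0 ≤ ∫ t in x..b, |f'' t| ^ p :=
    intervalIntegral.integral_nonneg hxb.le fun t _ => by positivity
  have htau : tau0 a b α β f f' x = (α / (x - a) * (∫ t in a..x, (t - a) ^ 2 * f'' t)
      + β / (b - x) * ∫ t in x..b, (t - b) ^ 2 * f'' t) / (2 * (α + β)) := by
    rw [P1, P2]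
    unfold tau0 intMean
    field_simp
    ring
  rw [htau, abs_div, abs_of_pos (by positivity : 0 < 2 * (α + β))]
  apply div_le_div_of_nonneg_right _ (by positivity)
  rw [← hadd]
  generalize (∫ t in a..x, |f'' t| ^ p) = V1 at *
  generalize (∫ t in x..b, |f'' t| ^ p) = V2 at *
  refine (abs_add_le _ _).trans ((add_le_add H1 H2).trans ?_)
  have m1 : 0 ≤ α ^ q * (x - a) ^ (q + 1) / (2 * q + 1) := by positivity
  have m2 : 0 ≤ β ^ q * (b - x) ^ (q + 1) / (2 * q + 1) := by positivity
  have e1 : 1 / (2 * q + 1) ^ (1 / q) *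
        (α ^ q * (x - a) ^ (q + 1) + β ^ q * (b - x) ^ (q + 1)) ^ (1 / q)
      = (α ^ q * (x - a) ^ (q + 1) / (2 * q + 1) + β ^ q * (b - x) ^ (q + 1) / (2 * q + 1)) ^ (1 / q) := by
    rw [← add_div, Real.div_rpow (by positivity) (by positivity)]
    ring
  rw [e1]
  generalize α ^ q * (x - a) ^ (q + 1) / (2 * q + 1) = U1 at *
  generalize β ^ q * (b - x) ^ (q + 1) / (2 * q + 1) = U2 at *
  have hin := Real.inner_le_Lp_mul_Lq_of_nonneg (Finset.univ : Finset (Fin 2))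
    (f := ![U1 ^ (1 / q), U2 ^ (1 / q)]) (g := ![V1 ^ (1 / p), V2 ^ (1 / p)]) hq.symm
    (by intro i _; fin_cases i <;> simp <;> positivity)
    (by intro i _; fin_cases i <;> simp <;> positivity)
  have r : ∀ u s : ℝ, 0 ≤ u → 0 < s → (u ^ (1 / s)) ^ s = u := by
    intro u s hu hs
    rw [← Real.rpow_mul hu, one_div_mul_cancel hs.ne', Real.rpow_one]
  simpa only [Fin.sum_univ_two, Matrix.cons_val_zero, Matrix.cons_val_one, Matrix.cons_val_fin_one, r _ _ m1 hq0, r _ _ m2 hq0,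
    r _ _ n1 hp0, r _ _ n2 hp0] using hin
end

section
/- If f″ ∈ L_1[a,b], then |τ₀(x;α,β)| ≤ (α(x−a) + β(b−x) + |α(x−a) − β(b−x)|)·‖f″‖_1/(4(α+β)), where ‖f″‖_1 = ∫_a^b |f″(t)| dt. -/
open MeasureTheory intervalIntegral

lemma aux_pt (c d x N : ℝ) (f f' : ℝ → ℝ) (hx : x ∈ Set.Icc c d)
    (hfd : ∀ t ∈ Set.Icc c d, HasDerivAt f (f' t) t)
    (hN : ∀ t ∈ Set.Icc c d, |f' t - f' x| ≤ N) (t : ℝ) (ht : t ∈ Set.Icc c d) :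
    |f t - f x - f' x * (t - x)| ≤ N * |t - x| := by
  have h := Convex.norm_image_sub_le_of_norm_hasDerivWithin_le
    (f := fun s => f s - f' x * s) (f' := fun s => f' s - f' x * 1) (C := N) (s := Set.Icc c d)
    (fun s hs => ((hfd s hs).sub ((hasDerivAt_id' s).const_mul (f' x))).hasDerivWithinAt)
    (fun s hs => by simpa using hN s hs) (convex_Icc c d) hx ht
  simp only [Real.norm_eq_abs] at h
  convert h using 2
  ring

lemma aux_left (c x N : ℝ) (f f' : ℝ → ℝ) (hx : c < x)
    (hfd : ∀ t ∈ Set.Icc c x, HasDerivAt f (f' t) t)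
    (hN : ∀ t ∈ Set.Icc c x, |f' t - f' x| ≤ N) :
    |intMean f c x - f x + (x - c) / 2 * f' x| ≤ N * (x - c) / 2 := by
  have hp := aux_pt c x x N f f' ⟨hx.le, le_rfl⟩ hfd hN
  have hfi : IntervalIntegrable f volume c x := by
    apply ContinuousOn.intervalIntegrable
    rw [Set.uIcc_of_le hx.le]
    exact fun t ht => (hfd t ht).continuousAt.continuousWithinAt
  have hb : ‖∫ t in c..x, (f t - (f x + f' x * (t - x)))‖ ≤ ∫ t in c..x, N * (x - t) := by
    apply intervalIntegral.norm_integral_le_of_norm_le hx.le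
    · refine Filter.Eventually.of_forall fun t ht => ?_
      have := hp t ⟨ht.1.le, ht.2⟩
      rw [abs_of_nonpos (by linarith [ht.2] : t - x ≤ 0)] at this
      rw [Real.norm_eq_abs]
      convert this using 2 <;> ring
    · exact Continuous.intervalIntegrable (by fun_prop) _ _
  rw [intervalIntegral.integral_sub hfi (Continuous.intervalIntegrable (by fun_prop) _ _),
    intervalIntegral.integral_add (by simp) (Continuous.intervalIntegrable (by fun_prop) _ _),
    intervalIntegral.integral_const_mul, intervalIntegral.integral_const_mul,
    intervalIntegral.integral_sub (by simp) (by simp),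
    intervalIntegral.integral_sub (by simp) (by simp)] at hb
  simp only [intervalIntegral.integral_const, integral_id, smul_eq_mul, Real.norm_eq_abs] at hb
  have h0 : 0 < x - c := by linarith
  unfold intMean
  have e : 1 / (x - c) * (∫ t in c..x, f t) - f x + (x - c) / 2 * f' x
      = (1 / (x - c)) * ((∫ t in c..x, f t) -
        ((x - c) * f x + f' x * ((x ^ 2 - c ^ 2) / 2 - (x - c) * x))) := by
    field_simp; ring
  rw [e, abs_mul, abs_of_pos (by positivity : 0 < 1 / (x - c)), one_div, inv_mul_le_iff₀ h0]
  refine hb.trans (le_of_eq ?_)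
  ring

lemma aux_right (x d N : ℝ) (f f' : ℝ → ℝ) (hx : x < d)
    (hfd : ∀ t ∈ Set.Icc x d, HasDerivAt f (f' t) t)
    (hN : ∀ t ∈ Set.Icc x d, |f' t - f' x| ≤ N) :
    |intMean f x d - f x - (d - x) / 2 * f' x| ≤ N * (d - x) / 2 := by
  have hp := aux_pt x d x N f f' ⟨le_rfl, hx.le⟩ hfd hN
  have hfi : IntervalIntegrable f volume x d := by
    apply ContinuousOn.intervalIntegrable
    rw [Set.uIcc_of_le hx.le]
    exact fun t ht => (hfd t ht).continuousAt.continuousWithinAt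
  have hb : ‖∫ t in x..d, (f t - (f x + f' x * (t - x)))‖ ≤ ∫ t in x..d, N * (t - x) := by
    apply intervalIntegral.norm_integral_le_of_norm_le hx.le
    · refine Filter.Eventually.of_forall fun t ht => ?_
      have := hp t ⟨ht.1.le, ht.2⟩
      rw [abs_of_nonneg (by linarith [ht.1] : 0 ≤ t - x)] at this
      rw [Real.norm_eq_abs]
      convert this using 2; ring
    · exact Continuous.intervalIntegrable (by fun_prop) _ _
  rw [intervalIntegral.integral_sub hfi (Continuous.intervalIntegrable (by fun_prop) _ _),
    intervalIntegral.integral_add (by simp) (Continuous.intervalIntegrable (by fun_prop) _ _),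
    intervalIntegral.integral_const_mul, intervalIntegral.integral_const_mul,
    intervalIntegral.integral_sub (by simp) (by simp)] at hb
  simp only [intervalIntegral.integral_const, integral_id, smul_eq_mul, Real.norm_eq_abs] at hb
  have h0 : 0 < d - x := by linarith
  unfold intMean
  have e : 1 / (d - x) * (∫ t in x..d, f t) - f x - (d - x) / 2 * f' x
      = (1 / (d - x)) * ((∫ t in x..d, f t) -
        ((d - x) * f x + f' x * ((d ^ 2 - x ^ 2) / 2 - (d - x) * x))) := by
    field_simp; ring
  rw [e, abs_mul, abs_of_pos (by positivity : 0 < 1 / (d - x)), one_div, inv_mul_le_iff₀ h0]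
  refine hb.trans (le_of_eq ?_)
  ring


theorem stmt_6 (a b α β x : ℝ) (f f' f'' : ℝ → ℝ)
    (hab : a < b)
    (hα : 0 ≤ α) (hβ : 0 ≤ β) (hαβ : 0 < α + β)
    (hax : a < x) (hxb : x < b)
    (hfd : ∀ t ∈ Set.Icc a b, HasDerivAt f (f' t) t)
    (hf''int : IntervalIntegrable f'' MeasureTheory.volume a b)
    (hac : ∀ t ∈ Set.Icc a b, f' t = f' a + ∫ u in a..t, f'' u)
    :
    |tau0 a b α β f f' x| ≤
      (α * (x - a) + β * (b - x) + |α * (x - a) - β * (b - x)|) *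
        (∫ t in a..b, |f'' t|) / (4 * (α + β)) := by
  have hI : ∀ s ∈ Set.Icc a b, ∀ t ∈ Set.Icc a b, IntervalIntegrable f'' volume s t := by
    intro s hs t ht
    apply hf''int.mono_set
    rw [Set.uIcc_of_le hab.le]
    exact Set.uIcc_subset_Icc hs ht
  have hd : ∀ s ∈ Set.Icc a b, ∀ t ∈ Set.Icc a b, f' t - f' s = ∫ u in s..t, f'' u := by
    intro s hs t ht
    have ha : a ∈ Set.Icc a b := ⟨le_rfl, hab.le⟩
    rw [hac t ht, hac s hs,
      ← intervalIntegral.integral_add_adjacent_intervals (hI a ha s hs) (hI s hs t ht)]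
    ring
  have hA : ∀ s t, a ≤ s → s ≤ t → t ≤ b → |f' t - f' s| ≤ ∫ u in s..t, |f'' u| := by
    intro s t h1 h2 h3
    rw [hd s ⟨h1, by linarith⟩ t ⟨by linarith, h3⟩]
    exact intervalIntegral.abs_integral_le_integral_abs h2
  have hm : ∀ s t s' t', a ≤ s → s ≤ s' → s' ≤ t' → t' ≤ t → t ≤ b →
      ∫ u in s'..t', |f'' u| ≤ ∫ u in s..t, |f'' u| := by
    intro s t s' t' h1 h2 h3 h4 h5
    apply intervalIntegral.integral_mono_interval h2 h3 h4
    · exact Filter.Eventually.of_forall fun u => abs_nonneg _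
    · exact (hI s ⟨h1, by linarith⟩ t ⟨by linarith, h5⟩).abs
  have hL := aux_left a x (∫ u in a..x, |f'' u|) f f' hax
    (fun t ht => hfd t ⟨ht.1, ht.2.trans hxb.le⟩) (fun t ht => by
      rw [abs_sub_comm]
      exact (hA t x ht.1 ht.2 hxb.le).trans (hm a x t x le_rfl ht.1 ht.2 le_rfl hxb.le))
  have hR := aux_right x b (∫ u in x..b, |f'' u|) f f' hxb
    (fun t ht => hfd t ⟨hax.le.trans ht.1, ht.2⟩) (fun t ht =>
      (hA x t hax.le ht.1 ht.2).trans (hm x b x t hax.le le_rfl ht.1 ht.2 le_rfl))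
  have hsum := intervalIntegral.integral_add_adjacent_intervals
    (hI a ⟨le_rfl, hab.le⟩ x ⟨hax.le, hxb.le⟩).abs (hI x ⟨hax.le, hxb.le⟩ b ⟨hab.le, le_rfl⟩).abs
  have n1 : 0 ≤ ∫ u in a..x, |f'' u| :=
    intervalIntegral.integral_nonneg hax.le fun u _ => abs_nonneg _
  have n2 : 0 ≤ ∫ u in x..b, |f'' u| :=
    intervalIntegral.integral_nonneg hxb.le fun u _ => abs_nonneg _
  rw [← hsum]
  generalize (∫ u in a..x, |f'' u|) = N1 at *
  generalize (∫ u in x..b, |f'' u|) = N2 at *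
  have e : tau0 a b α β f f' x = (1 / (α + β)) *
      (α * (intMean f a x - f x + (x - a) / 2 * f' x) +
        β * (intMean f x b - f x - (b - x) / 2 * f' x)) := by
    unfold tau0
    field_simp
    ring
  rw [e, abs_mul, abs_of_pos (by positivity : 0 < 1 / (α + β)), one_div, inv_mul_le_iff₀ hαβ]
  have e2 : ∀ K : ℝ, (α + β) * (K / (4 * (α + β))) = K / 4 := by
    intro K
    field_simp
  rw [e2]
  have h1 := abs_add_le (α * (intMean f a x - f x + (x - a) / 2 * f' x))
    (β * (intMean f x b - f x - (b - x) / 2 * f' x))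
  rw [abs_mul, abs_mul, abs_of_nonneg hα, abs_of_nonneg hβ] at h1
  have h2 := mul_le_mul_of_nonneg_left hL hα
  have h3 := mul_le_mul_of_nonneg_left hR hβ
  have h4 := mul_le_mul_of_nonneg_right (le_abs_self (α * (x - a) - β * (b - x))) n1
  have h5 := mul_le_mul_of_nonneg_right (neg_le_abs (α * (x - a) - β * (b - x))) n2
  linarith
end

section
/- Taking h = 1: if f″ is essentially bounded on [a,b], then for every x with a < x < b, the quantity τ(x;α,β) formed with h = 1 satisfies |τ(x;α,β)| ≤ (‖f″‖_∞/(6(α+β)))·[ (α/(x−a))·{(x−(a+b)/2)³ + ((b−a)/2)³} + (β/(b−x))·{((a+b)/2−x)³ + ((b−a)/2)³} ], where ‖f″‖_∞ denotes the essential supremum of |f″| on [a,b]. -/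
open MeasureTheory intervalIntegral

open scoped NNReal in
lemma aux_part (c d m : ℝ) (f g : ℝ → ℝ) (K : ℝ≥0) (hcd : c ≤ d)
    (hfd : ∀ t ∈ Set.Icc c d, HasDerivAt f (g t) t)
    (hL : LipschitzOnWith K g (Set.Icc c d)) :
    |(d - m) ^ 2 / 2 * g d - (c - m) ^ 2 / 2 * g c - (d - m) * f d + (c - m) * f c
      + ∫ t in c..d, f t| ≤ K / 6 * ((d - m) ^ 3 - (c - m) ^ 3) := by
  have hu : Set.uIcc c d = Set.Icc c d := Set.uIcc_of_le hcd
  have hgc : ContinuousOn g (Set.uIcc c d) := hu ▸ hL.continuousOn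
  have hg : AbsolutelyContinuousOnInterval g c d :=
    LipschitzOnWith.absolutelyContinuousOnInterval (hu ▸ hL)
  have hl : AbsolutelyContinuousOnInterval (fun t : ℝ => t - m) c d := by
    apply LipschitzOnWith.absolutelyContinuousOnInterval (K := 1)
    apply LipschitzOnWith.of_dist_le_mul
    intro x _ y _
    simp
  have h1 := (hl.fun_mul hl).integral_mul_deriv_eq_deriv_mul hg
  have hder : ∀ t : ℝ, HasDerivAt (fun t : ℝ => (t - m) * (t - m)) (2 * (t - m)) t := by
    intro t
    have := ((hasDerivAt_id t).sub_const m).mul ((hasDerivAt_id t).sub_const m)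
    convert! this using 1
    simp; ring
  simp only [(hder _).deriv] at h1
  have h2 := intervalIntegral.integral_mul_deriv_eq_deriv_mul (a := c) (b := d)
    (u := fun t : ℝ => t - m) (u' := fun _ => 1) (v := f) (v' := g)
    (fun t _ => (hasDerivAt_id t).sub_const m) (fun t ht => hfd t (hu ▸ ht))
    (by simp) hgc.intervalIntegrable
  simp only [one_mul] at h2
  have h3 : ∫ t in c..d, 2 * (t - m) * g t = 2 * ∫ t in c..d, (t - m) * g t := by
    rw [← intervalIntegral.integral_const_mul]
    simp only [mul_assoc]
  have h4 : ‖∫ t in c..d, (t - m) * (t - m) * deriv g t‖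
      ≤ ∫ t in c..d, (K : ℝ) * (t - m) ^ 2 := by
    apply intervalIntegral.norm_integral_le_of_norm_le hcd
    · have : ∀ᵐ t : ℝ, t ≠ d := by simp [ae_iff]
      filter_upwards [this] with t ht hm
      have := norm_deriv_le_of_lipschitzOn
        (Icc_mem_nhds hm.1 (lt_of_le_of_ne hm.2 ht)) hL
      rw [norm_mul, Real.norm_of_nonneg (mul_self_nonneg _), ← sq, mul_comm]
      exact mul_le_mul_of_nonneg_right this (sq_nonneg _)
    · apply Continuous.intervalIntegrable
      fun_prop
  have h5 : ∫ t in c..d, (K : ℝ) * (t - m) ^ 2 = K / 3 * ((d - m) ^ 3 - (c - m) ^ 3) := by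
    rw [intervalIntegral.integral_const_mul,
      intervalIntegral.integral_comp_sub_right (fun t => t ^ 2) m, integral_pow]
    push_cast
    ring
  rw [h5, h1, h3, h2, Real.norm_eq_abs] at h4
  rw [abs_le] at h4 ⊢
  constructor <;> linarith [h4.1, h4.2]

theorem stmt_10 (a b α β : ℝ) (f f' f'' : ℝ → ℝ)
    (hab : a < b)
    (hα : 0 ≤ α) (hβ : 0 ≤ β) (hαβ : 0 < α + β)
    (hfd : ∀ t ∈ Set.Icc a b, HasDerivAt f (f' t) t)
    (hf''int : IntervalIntegrable f'' MeasureTheory.volume a b)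
    (hac : ∀ t ∈ Set.Icc a b, f' t = f' a + ∫ u in a..t, f'' u)
    (K : ℝ) (hK : ∀ᵐ t ∂MeasureTheory.volume.restrict (Set.Icc a b), |f'' t| ≤ K)
    :
    ∀ x : ℝ, a < x → x < b →
      |(1 / (2 * (α + β))) * ((α / (x - a)) * (x - (a + b) / 2) ^ 2
            - (β / (b - x)) * (x - (a + b) / 2) ^ 2) * f' x
        - (1 / (α + β)) * ((α / (x - a)) * (x - (a + b) / 2)
            - (β / (b - x)) * (x - (a + b) / 2)) * f x
        - ((b - a) / (2 * (α + β))) * ((α / (x - a)) * f a + (β / (b - x)) * f b)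
        + ((b - a) ^ 2 / (8 * (α + β))) * ((β / (b - x)) * f' b - (α / (x - a)) * f' a)
        + (1 / (α + β)) * (α * intMean f a x + β * intMean f x b)| ≤
      (K / (6 * (α + β))) *
        ((α / (x - a)) * ((x - (a + b) / 2) ^ 3 + ((b - a) / 2) ^ 3)
          + (β / (b - x)) * (((a + b) / 2 - x) ^ 3 + ((b - a) / 2) ^ 3)) := by
  have hKv : ∀ᵐ t : ℝ, t ∈ Set.Icc a b → |f'' t| ≤ K :=
    (ae_restrict_iff' measurableSet_Icc).1 hK
  have hK0 : 0 ≤ K := by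
    by_contra hneg
    have : ∀ᵐ t ∂MeasureTheory.volume.restrict (Set.Icc a b), False := by
      filter_upwards [hK] with t ht
      exact hneg ((abs_nonneg _).trans ht)
    rw [Filter.eventually_false_iff_eq_bot, ae_eq_bot, Measure.restrict_eq_zero,
      Real.volume_Icc, ENNReal.ofReal_eq_zero] at this
    linarith
  have hL : LipschitzOnWith K.toNNReal f' (Set.Icc a b) := by
    apply LipschitzOnWith.of_dist_le_mul
    intro s hs t ht
    rw [Real.dist_eq, Real.dist_eq, Real.coe_toNNReal K hK0, hac s hs, hac t ht,
      add_sub_add_left_eq_sub]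
    have hi : ∀ r ∈ Set.Icc a b, IntervalIntegrable f'' volume a r := fun r hr =>
      hf''int.mono_set (by
        rw [Set.uIcc_of_le hab.le, Set.uIcc_of_le hr.1]
        exact Set.Icc_subset_Icc_right hr.2)
    rw [intervalIntegral.integral_interval_sub_left (hi s hs) (hi t ht)]
    rw [← Real.norm_eq_abs (∫ u in t..s, f'' u)]
    apply intervalIntegral.norm_integral_le_of_norm_le_const_ae
    filter_upwards [hKv] with r hr hm
    have hm' := Set.uIoc_subset_uIcc hm
    exact hr (Set.uIcc_subset_Icc ht hs hm')
  intro x hax hxb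
  have hA := aux_part a x ((a + b) / 2) f f' K.toNNReal hax.le
    (fun t ht => hfd t ⟨ht.1, ht.2.trans hxb.le⟩)
    (hL.mono (Set.Icc_subset_Icc_right hxb.le))
  have hB := aux_part x b ((a + b) / 2) f f' K.toNNReal hxb.le
    (fun t ht => hfd t ⟨hax.le.trans ht.1, ht.2⟩)
    (hL.mono (Set.Icc_subset_Icc_left hax.le))
  rw [Real.coe_toNNReal K hK0] at hA hB
  unfold intMean
  have hp : 0 < x - a := by linarith
  have hq : 0 < b - x := by linarith
  generalize (∫ t in a..x, f t) = I at *
  generalize (∫ t in x..b, f t) = J at *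
  have hu : 0 ≤ α / (x - a) / (α + β) := by positivity
  have hv : 0 ≤ β / (b - x) / (α + β) := by positivity
  have hA' := mul_le_mul_of_nonneg_left hA hu
  have hB' := mul_le_mul_of_nonneg_left hB hv
  rw [← abs_of_nonneg hu, ← abs_mul, abs_of_nonneg hu] at hA'
  rw [← abs_of_nonneg hv, ← abs_mul, abs_of_nonneg hv] at hB'
  have key := (abs_add_le _ _).trans (add_le_add hA' hB')
  refine (le_of_eq ?_).trans (key.trans (le_of_eq ?_))
  · congr 1
    field_simp
    ring
  · field_simp
    ring
end

section
/- If f″ is essentially bounded on [a,b], then | (1/2)·f((a+b)/2) + (1/4)·(f(a)+f(b)) − ((b−a)/32)·(f′(b)−f′(a)) − (1/(b−a))·∫_a^b f(t) dt | ≤ (b−a)²·‖f″‖_∞/96, where ‖f″‖_∞ denotes the essential supremum of |f″| on [a,b]. -/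
open MeasureTheory intervalIntegral

lemma aux_pow (g : ℝ → ℝ) (x y K : ℝ) (n : ℕ)
    (h : ∀ᵐ u ∂volume.restrict (Set.uIoc x y), |g u| ≤ K * |u - x| ^ n) :
    |∫ u in x..y, g u| ≤ K * (|y - x| ^ (n + 1) / (n + 1)) := by
  have h1 : |∫ u in x..y, g u| = |∫ u in Set.uIoc x y, g u| := by
    have := norm_intervalIntegral_eq g x y volume
    simpa [Real.norm_eq_abs] using this
  have hi : Integrable (fun u => K * |u - x| ^ n) (volume.restrict (Set.uIoc x y)) := by
    have : Continuous (fun u => K * |u - x| ^ n) := by fun_prop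
    exact (intervalIntegrable_iff.1 (this.intervalIntegrable x y))
  have h2 := norm_integral_le_of_norm_le (f := g) hi (by simpa [Real.norm_eq_abs] using h)
  rw [h1, ← Real.norm_eq_abs]
  refine h2.trans (le_of_eq ?_)
  rw [MeasureTheory.integral_const_mul, integral_pow_abs_sub_uIoc]

theorem stmt_11 (a b : ℝ) (f f' f'' : ℝ → ℝ)
    (hab : a < b)
    (hfd : ∀ t ∈ Set.Icc a b, HasDerivAt f (f' t) t)
    (hf''int : IntervalIntegrable f'' MeasureTheory.volume a b)
    (hac : ∀ t ∈ Set.Icc a b, f' t = f' a + ∫ u in a..t, f'' u)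
    (K : ℝ) (hK : ∀ᵐ t ∂MeasureTheory.volume.restrict (Set.Icc a b), |f'' t| ≤ K)
    :
    |(1 / 2) * f ((a + b) / 2) + (1 / 4) * (f a + f b)
        - ((b - a) / 32) * (f' b - f' a) - (1 / (b - a)) * ∫ t in a..b, f t| ≤
      (b - a) ^ 2 * K / 96 := by
  have sub : ∀ x ∈ Set.Icc a b, ∀ y ∈ Set.Icc a b, Set.uIcc x y ⊆ Set.Icc a b :=
    fun x hx y hy => Set.ordConnected_Icc.uIcc_subset hx hy
  have ha : a ∈ Set.Icc a b := ⟨le_rfl, hab.le⟩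
  have hb : b ∈ Set.Icc a b := ⟨hab.le, le_rfl⟩
  have i2 : ∀ x ∈ Set.Icc a b, ∀ y ∈ Set.Icc a b, IntervalIntegrable f'' volume x y := by
    intro x hx y hy
    exact hf''int.mono_set (by rw [Set.uIcc_of_le hab.le]; exact sub x hx y hy)
  have l1 : ∀ x ∈ Set.Icc a b, ∀ y ∈ Set.Icc a b, |f' y - f' x| ≤ K * |y - x| := by
    intro x hx y hy
    have e : f' y - f' x = ∫ u in x..y, f'' u := by
      rw [hac x hx, hac y hy,
        ← integral_add_adjacent_intervals (i2 a ha x hx) (i2 x hx y hy)]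
      ring
    rw [e]
    have := aux_pow f'' x y K 0 (by
      simpa using ae_restrict_of_ae_restrict_of_subset
        (Set.uIoc_subset_uIcc.trans (sub x hx y hy)) hK)
    simpa using this
  have c1 : ContinuousOn f' (Set.Icc a b) := by
    have : LipschitzOnWith (Real.toNNReal K) f' (Set.Icc a b) := by
      refine LipschitzOnWith.of_dist_le_mul fun y hy x hx => ?_
      rw [Real.dist_eq, Real.dist_eq]
      exact (l1 x hx y hy).trans
        (mul_le_mul_of_nonneg_right (Real.le_coe_toNNReal K) (abs_nonneg _))
    exact this.continuousOn
  have c0 : ContinuousOn f (Set.Icc a b) := fun t ht => (hfd t ht).continuousAt.continuousWithinAt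
  have i1 : ∀ x ∈ Set.Icc a b, ∀ y ∈ Set.Icc a b, IntervalIntegrable f' volume x y :=
    fun x hx y hy => (c1.mono (sub x hx y hy)).intervalIntegrable
  have i0 : ∀ x ∈ Set.Icc a b, ∀ y ∈ Set.Icc a b, IntervalIntegrable f volume x y :=
    fun x hx y hy => (c0.mono (sub x hx y hy)).intervalIntegrable
  have l2 : ∀ x ∈ Set.Icc a b, ∀ y ∈ Set.Icc a b,
      |f y - f x - (y - x) * f' x| ≤ K / 2 * |y - x| ^ 2 := by
    intro x hx y hy
    have e : f y - f x - (y - x) * f' x = ∫ u in x..y, (f' u - f' x) := by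
      rw [intervalIntegral.integral_sub (i1 x hx y hy) (by simp), integral_eq_sub_of_hasDerivAt
        (fun t ht => hfd t (sub x hx y hy ht)) (i1 x hx y hy)]
      simp
    rw [e]
    have := aux_pow (fun u => f' u - f' x) x y K 1 (by
      refine (ae_restrict_iff' measurableSet_uIoc).2 (Filter.Eventually.of_forall fun u hu => ?_)
      simpa using l1 x hx u (sub x hx y hy (Set.uIoc_subset_uIcc hu)))
    refine this.trans (le_of_eq ?_)
    norm_num
    ring
  have l3 : ∀ x ∈ Set.Icc a b, ∀ y ∈ Set.Icc a b,
      |(∫ u in x..y, f u) - (y - x) * f x - (y - x) ^ 2 / 2 * f' x| ≤ K / 6 * |y - x| ^ 3 := by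
    intro x hx y hy
    have e : (∫ u in x..y, f u) - (y - x) * f x - (y - x) ^ 2 / 2 * f' x
        = ∫ u in x..y, (f u - f x - (u - x) * f' x) := by
      have hc : IntervalIntegrable (fun u : ℝ => (u - x) * f' x) volume x y :=
        Continuous.intervalIntegrable (by fun_prop) _ _
      rw [intervalIntegral.integral_sub ((i0 x hx y hy).sub (by simp)) hc,
        intervalIntegral.integral_sub (i0 x hx y hy) (by simp), intervalIntegral.integral_mul_const,
        intervalIntegral.integral_sub (by simp) (by simp)]
      simp only [integral_id, intervalIntegral.integral_const, smul_eq_mul]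
      ring
    rw [e]
    have := aux_pow (fun u => f u - f x - (u - x) * f' x) x y (K / 2) 2 (by
      refine (ae_restrict_iff' measurableSet_uIoc).2 (Filter.Eventually.of_forall fun u hu => ?_)
      exact l2 x hx u (sub x hx y hy (Set.uIoc_subset_uIcc hu)))
    refine this.trans (le_of_eq ?_)
    norm_num
    ring
  obtain ⟨h, rfl⟩ : ∃ h, b = a + 4 * h := ⟨(b - a) / 4, by ring⟩
  have hh : 0 < h := by linarith
  have m1 : a + h ∈ Set.Icc a (a + 4 * h) := ⟨by linarith, by linarith⟩
  have m2 : a + 2 * h ∈ Set.Icc a (a + 4 * h) := ⟨by linarith, by linarith⟩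
  have m3 : a + 3 * h ∈ Set.Icc a (a + 4 * h) := ⟨by linarith, by linarith⟩
  have t1 := l3 _ ha _ m1
  have t2 := l3 _ m2 _ m1
  have t3 := l3 _ m2 _ m3
  have t4 := l3 _ hb _ m3
  have s1 := integral_add_adjacent_intervals (i0 _ ha _ m1) (i0 _ m1 _ m2)
  have s2 := integral_add_adjacent_intervals (i0 _ ha _ m2) (i0 _ m2 _ m3)
  have s3 := integral_add_adjacent_intervals (i0 _ ha _ m3) (i0 _ m3 _ hb)
  rw [integral_symm (a + h) (a + 2 * h)] at t2
  rw [integral_symm (a + 3 * h) (a + 4 * h)] at t4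
  rw [show a + h - a = h by ring, abs_of_pos hh] at t1
  rw [show a + h - (a + 2 * h) = -h by ring, abs_neg, abs_of_pos hh] at t2
  rw [show a + 3 * h - (a + 2 * h) = h by ring, abs_of_pos hh] at t3
  rw [show a + 3 * h - (a + 4 * h) = -h by ring, abs_neg, abs_of_pos hh] at t4
  rw [show (a + (a + 4 * h)) / 2 = a + 2 * h by ring, show a + 4 * h - a = 4 * h by ring]
  rw [← s3, ← s2, ← s1]
  rw [abs_le] at t1 t2 t3 t4
  generalize (∫ u in a..(a + h), f u) = I1 at *
  generalize (∫ u in (a + h)..(a + 2 * h), f u) = I2 at *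
  generalize (∫ u in (a + 2 * h)..(a + 3 * h), f u) = I3 at *
  generalize (∫ u in (a + 3 * h)..(a + 4 * h), f u) = I4 at *
  have key : 1 / 2 * f (a + 2 * h) + 1 / 4 * (f a + f (a + 4 * h))
      - 4 * h / 32 * (f' (a + 4 * h) - f' a) - 1 / (4 * h) * (I1 + I2 + I3 + I4)
      = (4 * h * (1 / 2 * f (a + 2 * h) + 1 / 4 * (f a + f (a + 4 * h)))
      - h ^ 2 / 2 * (f' (a + 4 * h) - f' a) - (I1 + I2 + I3 + I4)) / (4 * h) := by
    field_simp
    ring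
  rw [key, abs_div, abs_of_pos (by linarith : (0 : ℝ) < 4 * h), div_le_iff₀ (by linarith), abs_le]
  obtain ⟨p1, q1⟩ := t1
  obtain ⟨p2, q2⟩ := t2
  obtain ⟨p3, q3⟩ := t3
  obtain ⟨p4, q4⟩ := t4
  constructor <;> nlinarith only [p1, q1, p2, q2, p3, q3, p4, q4]
end

section
/- If f″ is essentially bounded on [a,b], then with x = (a+3b)/4 one has | ((b−a)/12)·f′(x) − (1/3)·f(x) − (1/2)·((1/3)f(a) + f(b)) + ((b−a)/16)·(f′(b) − (1/3)f′(a)) + (2/(b−a))·((1/3)∫_a^x f(t)dt + ∫_x^b f(t)dt) | ≤ (b−a)²·‖f″‖_∞/48, where ‖f″‖_∞ denotes the essential supremum of |f″| on [a,b]. -/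
open MeasureTheory intervalIntegral

lemma piece_bound (α β c K : ℝ) (f f' f'' : ℝ → ℝ) (hab : α ≤ β)
    (hfd : ∀ t ∈ Set.Icc α β, HasDerivAt f (f' t) t)
    (hint : IntervalIntegrable f'' volume α β)
    (hac : ∀ t ∈ Set.Icc α β, f' t = f' α + ∫ u in α..t, f'' u)
    (hK : ∀ᵐ t, t ∈ Set.Icc α β → |f'' t| ≤ K) :
    |(β - c) ^ 2 * f' β - (α - c) ^ 2 * f' α - 2 * (β - c) * f β + 2 * (α - c) * f α
      + 2 * ∫ t in α..β, f t| ≤ K * (((β - c) ^ 3 - (α - c) ^ 3) / 3) := by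
  have hu : Set.uIcc α β = Set.Icc α β := Set.uIcc_of_le hab
  have hα : α ∈ Set.Icc α β := ⟨le_rfl, hab⟩
  have hβ : β ∈ Set.Icc α β := ⟨hab, le_rfl⟩
  have hH := hint.absolutelyContinuousOnInterval_intervalIntegral (c := α) (by simp)
  have hconst : AbsolutelyContinuousOnInterval (fun _ : ℝ => f' α) α β :=
    ContDiffOn.absolutelyContinuousOnInterval (by fun_prop)
  have hp : AbsolutelyContinuousOnInterval (fun t : ℝ => (t - c) ^ 2) α β :=
    ContDiffOn.absolutelyContinuousOnInterval (by fun_prop)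
  have hg : AbsolutelyContinuousOnInterval (fun t => f' α + ∫ u in α..t, f'' u) α β :=
    hconst.add hH
  have hf'c : ContinuousOn f' (Set.uIcc α β) := by
    refine hg.continuousOn.congr ?_
    intro t ht
    exact hac t (hu ▸ ht)
  have h1 := hp.integral_mul_deriv_eq_deriv_mul hg
  have e1 : ∫ t in α..β, (t - c) ^ 2 * deriv (fun t => f' α + ∫ u in α..t, f'' u) t
      = ∫ t in α..β, (t - c) ^ 2 * f'' t := by
    apply intervalIntegral.integral_congr_ae
    filter_upwards [hint.ae_hasDerivAt_integral] with t ht h2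
    have := (ht (Set.uIoc_subset_uIcc h2) α (by simp)).const_add (f' α)
    rw [this.deriv]
  have e2 : ∫ t in α..β, deriv (fun t : ℝ => (t - c) ^ 2) t * (f' α + ∫ u in α..t, f'' u)
      = ∫ t in α..β, (2 * (t - c)) * f' t := by
    apply intervalIntegral.integral_congr
    intro t ht
    have hd : HasDerivAt (fun t : ℝ => (t - c) ^ 2) (2 * (t - c)) t := by
      simpa using ((hasDerivAt_id t).sub_const c).fun_pow 2
    simp only
    rw [hd.deriv, hac t (hu ▸ ht)]
  have e3 : ∫ t in α..β, (2 * (t - c)) * f' t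
      = 2 * (β - c) * f β - 2 * (α - c) * f α - ∫ t in α..β, 2 * f t := by
    refine integral_mul_deriv_eq_deriv_mul (u := fun t => 2 * (t - c)) (u' := fun _ => 2)
      ?_ (fun t ht => hfd t (hu ▸ ht)) (by simp) hf'c.intervalIntegrable
    intro t _
    simpa using ((hasDerivAt_id t).sub_const c).const_mul 2
  rw [e1, e2, e3, intervalIntegral.integral_const_mul] at h1
  simp only [← hac α hα, ← hac β hβ] at h1
  have h4 : ‖∫ t in α..β, (t - c) ^ 2 * f'' t‖ ≤ ∫ t in α..β, K * (t - c) ^ 2 := by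
    apply intervalIntegral.norm_integral_le_of_norm_le hab
    · filter_upwards [hK] with t ht h2
      have := ht ⟨h2.1.le, h2.2⟩
      rw [Real.norm_eq_abs, abs_mul, abs_of_nonneg (sq_nonneg _), mul_comm]
      exact mul_le_mul_of_nonneg_right this (sq_nonneg _)
    · exact Continuous.intervalIntegrable (by fun_prop) _ _
  have e5 : ∫ t in α..β, K * (t - c) ^ 2 = K * (((β - c) ^ 3 - (α - c) ^ 3) / 3) := by
    rw [intervalIntegral.integral_const_mul,
      intervalIntegral.integral_comp_sub_right (fun t => t ^ 2) c, integral_pow]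
    norm_num
  rw [e5, h1, Real.norm_eq_abs] at h4
  convert h4 using 2
  ring

theorem stmt_12 (a b x : ℝ) (f f' f'' : ℝ → ℝ)
    (hab : a < b)
    (hfd : ∀ t ∈ Set.Icc a b, HasDerivAt f (f' t) t)
    (hf''int : IntervalIntegrable f'' MeasureTheory.volume a b)
    (hac : ∀ t ∈ Set.Icc a b, f' t = f' a + ∫ u in a..t, f'' u)
    (K : ℝ) (hK : ∀ᵐ t ∂MeasureTheory.volume.restrict (Set.Icc a b), |f'' t| ≤ K)
    (hx : x = (a + 3 * b) / 4) :
    |((b - a) / 12) * f' x - (1 / 3) * f x - (1 / 2) * ((1 / 3) * f a + f b)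
        + ((b - a) / 16) * (f' b - (1 / 3) * f' a)
        + (2 / (b - a)) * ((1 / 3) * (∫ t in a..x, f t) + ∫ t in x..b, f t)| ≤
      (b - a) ^ 2 * K / 48 := by
  have hax : a ≤ x := by linarith
  have hxb : x ≤ b := by linarith
  have hK' := (ae_restrict_iff' measurableSet_Icc).1 hK
  have i1 : IntervalIntegrable f'' volume a x := hf''int.mono_set (by
    rw [Set.uIcc_of_le hax, Set.uIcc_of_le hab.le]; exact Set.Icc_subset_Icc le_rfl hxb)
  have i2 : ∀ t ∈ Set.Icc x b, IntervalIntegrable f'' volume x t := fun t ht =>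
    hf''int.mono_set (by
      rw [Set.uIcc_of_le ht.1, Set.uIcc_of_le hab.le]; exact Set.Icc_subset_Icc hax ht.2)
  have A := piece_bound a x ((3 * a + b) / 4) K f f' f'' hax
    (fun t ht => hfd t ⟨ht.1, ht.2.trans hxb⟩) i1 (fun t ht => hac t ⟨ht.1, ht.2.trans hxb⟩)
    (by filter_upwards [hK'] with t h ht using h ⟨ht.1, ht.2.trans hxb⟩)
  have B := piece_bound x b x K f f' f'' hxb
    (fun t ht => hfd t ⟨hax.trans ht.1, ht.2⟩) (i2 b ⟨hxb, le_rfl⟩)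
    (fun t ht => by
      rw [hac t ⟨hax.trans ht.1, ht.2⟩, hac x ⟨hax, hxb⟩, add_assoc,
        intervalIntegral.integral_add_adjacent_intervals i1 (i2 t ht)])
    (by filter_upwards [hK'] with t h ht using h ⟨hax.trans ht.1, ht.2⟩)
  set I := ∫ t in a..x, f t
  set J := ∫ t in x..b, f t
  have hL : 0 < b - a := by linarith
  have h12 := abs_add_le ((1 / 3) * ((x - (3 * a + b) / 4) ^ 2 * f' x - (a - (3 * a + b) / 4) ^ 2 * f' a
    - 2 * (x - (3 * a + b) / 4) * f x + 2 * (a - (3 * a + b) / 4) * f a + 2 * I))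
    ((b - x) ^ 2 * f' b - (x - x) ^ 2 * f' x - 2 * (b - x) * f b + 2 * (x - x) * f x + 2 * J)
  rw [abs_mul, abs_of_pos (by norm_num : (0 : ℝ) < 1 / 3)] at h12
  rw [← mul_le_mul_iff_right₀ hL]
  nth_rewrite 1 [← abs_of_pos hL]
  rw [← abs_mul]
  calc _ = _ := by
        congr 1
        generalize f' x = p, f x = q
        rw [hx]
        field_simp
        ring
    _ ≤ _ := h12
    _ ≤ _ := add_le_add (mul_le_mul_of_nonneg_left A (by norm_num)) B
    _ = _ := by rw [hx]; ring
end

section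
/- If f″ is essentially bounded on [a,b], then for every h ∈ [0,1], | (h−1)·f((a+b)/2) − (h/2)·(f(a)+f(b)) + (h²(b−a)/8)·(f′(b)−f′(a)) + (1/(b−a))·∫_a^b f(t) dt | ≤ ((1−h)³ + h³)·(b−a)²·‖f″‖_∞/24, where ‖f″‖_∞ denotes the essential supremum of |f″| on [a,b]. -/
open MeasureTheory intervalIntegral


theorem kernel_bound (a b c : ℝ) (f f' f'' : ℝ → ℝ)
    (hab : a ≤ b)
    (hfd : ∀ t ∈ Set.Icc a b, HasDerivAt f (f' t) t)
    (hf''int : IntervalIntegrable f'' MeasureTheory.volume a b)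
    (hac : ∀ t ∈ Set.Icc a b, f' t = f' a + ∫ u in a..t, f'' u)
    (K : ℝ) (hK : ∀ᵐ t ∂MeasureTheory.volume.restrict (Set.Icc a b), |f'' t| ≤ K) :
    |(b - c) ^ 2 / 2 * f' b - (a - c) ^ 2 / 2 * f' a - (b - c) * f b + (a - c) * f a
      + ∫ t in a..b, f t| ≤ K * ((b - c) ^ 3 - (a - c) ^ 3) / 6 := by
  have hu : Set.uIcc a b = Set.Icc a b := Set.uIcc_of_le hab
  have hG := hf''int.absolutelyContinuousOnInterval_intervalIntegral (c := a) (by simp)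
  have hg : AbsolutelyContinuousOnInterval (fun t : ℝ => (t - c) ^ 2 / 2) a b := by
    apply ContDiffOn.absolutelyContinuousOnInterval
    fun_prop
  have hgd : ∀ t : ℝ, HasDerivAt (fun t : ℝ => (t - c) ^ 2 / 2) (t - c) t := by
    intro t
    have := (((hasDerivAt_id t).sub_const c).pow 2).div_const 2
    convert! this using 1
    simp
  have h1 := hg.integral_mul_deriv_eq_deriv_mul hG
  have hGc := hG.continuousOn
  have hGi := hGc.intervalIntegrable (μ := volume)
  have hf'c : ContinuousOn f' (Set.uIcc a b) := by
    refine ((continuousOn_const (c := f' a)).add hGc).congr (fun t ht => ?_)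
    exact hac t (hu ▸ ht)
  have hf'i := hf'c.intervalIntegrable (μ := volume)
  have h2 : ∫ t in a..b, (t - c) * f' t = (b - c) * f b - (a - c) * f a - ∫ t in a..b, 1 * f t := by
    apply intervalIntegral.integral_mul_deriv_eq_deriv_mul
    · intro t _
      exact (hasDerivAt_id t).sub_const c
    · intro t ht
      exact hfd t (hu ▸ ht)
    · simp
    · exact hf'i
  have h3 : ∫ t in a..b, (t - c) = (b - c) ^ 2 / 2 - (a - c) ^ 2 / 2 := by
    apply intervalIntegral.integral_eq_sub_of_hasDerivAt (fun t _ => hgd t)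
    apply Continuous.intervalIntegrable
    fun_prop
  have h4 : ∫ t in a..b, deriv (fun t : ℝ => (t - c) ^ 2 / 2) t * (∫ u in a..t, f'' u)
      = (∫ t in a..b, (t - c) * f' t) - (∫ t in a..b, (t - c)) * f' a := by
    rw [← intervalIntegral.integral_mul_const, ← intervalIntegral.integral_sub]
    · apply intervalIntegral.integral_congr
      intro t ht
      simp only [(hgd t).deriv]
      rw [hac t (hu ▸ ht)]
      ring
    · exact (ContinuousOn.mul (by fun_prop) hf'c).intervalIntegrable
    · apply Continuous.intervalIntegrable
      fun_prop
  have h5 : ∫ t in a..b, K * ((t - c) ^ 2 / 2) = K * ((b - c) ^ 3 - (a - c) ^ 3) / 6 := by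
    rw [intervalIntegral.integral_eq_sub_of_hasDerivAt (f := fun t => K * (t - c) ^ 3 / 6)]
    · ring
    · intro t _
      have := ((((hasDerivAt_id t).sub_const c).pow 3).const_mul K).div_const 6
      convert! this using 1
      simp
      ring
    · apply Continuous.intervalIntegrable
      fun_prop
  have h6 : (b - c) ^ 2 / 2 * f' b - (a - c) ^ 2 / 2 * f' a - (b - c) * f b + (a - c) * f a
      + ∫ t in a..b, f t
      = ∫ t in a..b, (t - c) ^ 2 / 2 * deriv (fun x => ∫ u in a..x, f'' u) t := by
    rw [h1, h4, h2, h3, hac b ⟨hab, le_rfl⟩]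
    simp
    ring
  rw [h6, ← h5, ← Real.norm_eq_abs]
  apply intervalIntegral.norm_integral_le_of_norm_le hab
  · rw [ae_restrict_iff' measurableSet_Icc] at hK
    filter_upwards [hK, hf''int.ae_hasDerivAt_integral] with t h7 h8 ht
    have ht' := Set.Ioc_subset_Icc_self ht
    rw [(h8 (hu ▸ ht') a (by simp)).deriv, Real.norm_eq_abs, abs_mul,
      abs_of_nonneg (by positivity), mul_comm]
    exact mul_le_mul_of_nonneg_right (h7 ht') (by positivity)
  · apply Continuous.intervalIntegrable
    fun_prop

theorem stmt_13 (a b : ℝ) (f f' f'' : ℝ → ℝ)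
    (hab : a < b)
    (hfd : ∀ t ∈ Set.Icc a b, HasDerivAt f (f' t) t)
    (hf''int : IntervalIntegrable f'' MeasureTheory.volume a b)
    (hac : ∀ t ∈ Set.Icc a b, f' t = f' a + ∫ u in a..t, f'' u)
    (K : ℝ) (hK : ∀ᵐ t ∂MeasureTheory.volume.restrict (Set.Icc a b), |f'' t| ≤ K)
    :
    ∀ h ∈ Set.Icc (0 : ℝ) 1,
      |(h - 1) * f ((a + b) / 2) - (h / 2) * (f a + f b)
          + (h ^ 2 * (b - a) / 8) * (f' b - f' a) + (1 / (b - a)) * ∫ t in a..b, f t| ≤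
        ((1 - h) ^ 3 + h ^ 3) * (b - a) ^ 2 * K / 24 := by
  intro h hh
  have hm1 : a ≤ (a + b) / 2 := by linarith
  have hm2 : (a + b) / 2 ≤ b := by linarith
  obtain ⟨m, hm⟩ : ∃ m, m = (a + b) / 2 := ⟨_, rfl⟩
  rw [← hm] at hm1 hm2 ⊢
  have s1 : Set.Icc a m ⊆ Set.Icc a b := Set.Icc_subset_Icc_right hm2
  have s2 : Set.Icc m b ⊆ Set.Icc a b := Set.Icc_subset_Icc_left hm1
  have i1 : IntervalIntegrable f'' volume a m := hf''int.mono_set (by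
    rwa [Set.uIcc_of_le hm1, Set.uIcc_of_le hab.le])
  have i2 : IntervalIntegrable f'' volume m b := hf''int.mono_set (by
    rwa [Set.uIcc_of_le hm2, Set.uIcc_of_le hab.le])
  have k1 := kernel_bound a m (a + h * (b - a) / 2) f f' f'' hm1 (fun t ht => hfd t (s1 ht)) i1
    (fun t ht => hac t (s1 ht)) K (ae_restrict_of_ae_restrict_of_subset s1 hK)
  have k2 := kernel_bound m b (b - h * (b - a) / 2) f f' f'' hm2 (fun t ht => hfd t (s2 ht)) i2
    (fun t ht => by
      rw [hac t (s2 ht), hac m ⟨hm1, hm2⟩, add_assoc,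
        intervalIntegral.integral_add_adjacent_intervals i1]
      exact i2.mono_set (by
        rw [Set.uIcc_of_le hm2, Set.uIcc_of_le ht.1]
        exact Set.Icc_subset_Icc_right ht.2))
    K (ae_restrict_of_ae_restrict_of_subset s2 hK)
  have hfc : ContinuousOn f (Set.Icc a b) :=
    fun t ht => (hfd t ht).continuousAt.continuousWithinAt
  have e := intervalIntegral.integral_add_adjacent_intervals (μ := volume) (f := f)
    ((hfc.mono s1).intervalIntegrable_of_Icc hm1) ((hfc.mono s2).intervalIntegrable_of_Icc hm2)
  rw [← e]
  have hba : 0 < b - a := by linarith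
  have k3 := (abs_add_le _ _).trans (add_le_add k1 k2)
  generalize (∫ t in a..m, f t) = I1 at *
  generalize (∫ t in m..b, f t) = I2 at *
  have e2 : (h - 1) * f m - (h / 2) * (f a + f b)
          + (h ^ 2 * (b - a) / 8) * (f' b - f' a) + (1 / (b - a)) * (I1 + I2)
      = ((m - (a + h * (b - a) / 2)) ^ 2 / 2 * f' m - (a - (a + h * (b - a) / 2)) ^ 2 / 2 * f' a
        - (m - (a + h * (b - a) / 2)) * f m + (a - (a + h * (b - a) / 2)) * f a + I1
        + ((b - (b - h * (b - a) / 2)) ^ 2 / 2 * f' b - (m - (b - h * (b - a) / 2)) ^ 2 / 2 * f' m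
        - (b - (b - h * (b - a) / 2)) * f b + (m - (b - h * (b - a) / 2)) * f m + I2)) / (b - a) := by
    rw [eq_div_iff hba.ne']
    have : 1 / (b - a) * (I1 + I2) * (b - a) = I1 + I2 := by field_simp
    rw [add_mul, this]
    generalize f m = fm
    generalize f' m = fm'
    subst hm
    ring
  rw [e2, abs_div, abs_of_pos hba, div_le_iff₀ hba]
  refine k3.trans (le_of_eq ?_)
  subst hm
  ring
end

section
/- If f″ ∈ L_1[a,b], then for every h ∈ [0,1], | (h−1)·f((a+b)/2) − (h/2)·(f(a)+f(b)) + (h²(b−a)/8)·(f′(b)−f′(a)) + (1/(b−a))·∫_a^b f(t) dt | ≤ ((b−a)/8)·max{(1−h)², h²}·‖f″‖_1, where ‖f″‖_1 = ∫_a^b |f″(t)| dt. -/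
open MeasureTheory intervalIntegral

lemma aux_ibp (c d p : ℝ) (f f' f'' : ℝ → ℝ) (hcd : c ≤ d)
    (hfd : ∀ t ∈ Set.Icc c d, HasDerivAt f (f' t) t)
    (hint : IntervalIntegrable f'' volume c d)
    (hac : ∀ t ∈ Set.Icc c d, f' t = f' c + ∫ u in c..t, f'' u) :
    ∫ t in c..d, (t - p) ^ 2 * f'' t =
      (d - p) ^ 2 * f' d - (c - p) ^ 2 * f' c - 2 * (d - p) * f d + 2 * (c - p) * f c
        + 2 * ∫ t in c..d, f t := by
  set G : ℝ → ℝ := fun t => f' c + ∫ u in c..t, f'' u with hG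
  have hu : Set.uIcc c d = Set.Icc c d := Set.uIcc_of_le hcd
  have hGac : AbsolutelyContinuousOnInterval G c d := by
    refine AbsolutelyContinuousOnInterval.add (f := fun _ => f' c) ?_ ?_
    · exact contDiffOn_const.absolutelyContinuousOnInterval
    · exact hint.absolutelyContinuousOnInterval_intervalIntegral (by simp)
  have hKac : AbsolutelyContinuousOnInterval (fun t : ℝ => (t - p) ^ 2) c d := by
    apply ContDiffOn.absolutelyContinuousOnInterval
    fun_prop
  have h1 := hKac.integral_mul_deriv_eq_deriv_mul hGac
  have hdK : ∀ t : ℝ, deriv (fun t : ℝ => (t - p) ^ 2) t = 2 * (t - p) := by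
    intro t
    have := ((hasDerivAt_id t).sub_const p).pow 2
    simpa using this.deriv
  have h2 : ∫ t in c..d, (t - p) ^ 2 * deriv G t = ∫ t in c..d, (t - p) ^ 2 * f'' t := by
    apply intervalIntegral.integral_congr_ae
    filter_upwards [hint.ae_hasDerivAt_integral] with x hx hx'
    have := (hx (Set.uIoc_subset_uIcc hx') c (by simp)).const_add (f' c)
    rw [this.deriv]
  have h3 : ∫ t in c..d, deriv (fun t : ℝ => (t - p) ^ 2) t * G t
      = ∫ t in c..d, (2 * (t - p)) * f' t := by
    apply intervalIntegral.integral_congr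
    intro t ht
    rw [hu] at ht
    simp only [hdK, hG, hac t ht]
  have hf'c : ContinuousOn f' (Set.uIcc c d) := by
    refine hGac.continuousOn.congr ?_
    intro t ht
    rw [hu] at ht
    exact hac t ht
  have h4 := intervalIntegral.integral_mul_deriv_eq_deriv_mul (a := c) (b := d)
    (u := fun t => 2 * (t - p)) (v := f) (u' := fun _ => 2) (v' := f')
    (fun x _ => by simpa using ((hasDerivAt_id x).sub_const p).const_mul 2)
    (fun x hx => hfd x (hu ▸ hx)) (by simp) hf'c.intervalIntegrable
  rw [h2, h3, h4, intervalIntegral.integral_const_mul] at h1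
  have e1 : G d = f' d := (hac d ⟨hcd, le_rfl⟩).symm
  have e2 : G c = f' c := by simp [hG]
  rw [h1, e1, e2]
  ring

lemma aux_bd (c d p M : ℝ) (g : ℝ → ℝ) (hcd : c ≤ d)
    (hint : IntervalIntegrable g volume c d)
    (hM : ∀ t ∈ Set.Icc c d, (t - p) ^ 2 ≤ M) :
    |∫ t in c..d, (t - p) ^ 2 * g t| ≤ M * ∫ t in c..d, |g t| := by
  refine (intervalIntegral.abs_integral_le_integral_abs hcd).trans ?_
  rw [← intervalIntegral.integral_const_mul]
  have hi : IntervalIntegrable (fun t => (t - p) ^ 2 * g t) volume c d :=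
    hint.continuousOn_mul (by fun_prop)
  apply intervalIntegral.integral_mono_on hcd hi.abs (hint.abs.const_mul M)
  intro t ht
  rw [abs_mul, abs_of_nonneg (sq_nonneg _)]
  exact mul_le_mul_of_nonneg_right (hM t ht) (abs_nonneg _)

theorem stmt_14 (a b : ℝ) (f f' f'' : ℝ → ℝ)
    (hab : a < b)
    (hfd : ∀ t ∈ Set.Icc a b, HasDerivAt f (f' t) t)
    (hf''int : IntervalIntegrable f'' MeasureTheory.volume a b)
    (hac : ∀ t ∈ Set.Icc a b, f' t = f' a + ∫ u in a..t, f'' u)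
    :
    ∀ h ∈ Set.Icc (0 : ℝ) 1,
      |(h - 1) * f ((a + b) / 2) - (h / 2) * (f a + f b)
          + (h ^ 2 * (b - a) / 8) * (f' b - f' a) + (1 / (b - a)) * ∫ t in a..b, f t| ≤
        ((b - a) / 8) * max ((1 - h) ^ 2) (h ^ 2) * ∫ t in a..b, |f'' t| := by
  rintro h ⟨h0, h1⟩
  obtain ⟨m, hm⟩ : ∃ m, m = (a + b) / 2 := ⟨_, rfl⟩
  have ham : a ≤ m := by linarith
  have hmb : m ≤ b := by linarith
  have sub : ∀ x ∈ Set.Icc a b, ∀ y ∈ Set.Icc a b, IntervalIntegrable f'' volume x y := by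
    intro x hx y hy
    refine hf''int.mono_set ?_
    rw [Set.uIcc_of_le hab.le]
    exact Set.uIcc_subset_Icc hx hy
  have ma : a ∈ Set.Icc a b := ⟨le_rfl, hab.le⟩
  have mm : m ∈ Set.Icc a b := ⟨ham, hmb⟩
  have mb : b ∈ Set.Icc a b := ⟨hab.le, le_rfl⟩
  have i1 := sub a ma m mm
  have i2 := sub m mm b mb
  have A1 := aux_ibp a m (a + h * (b - a) / 2) f f' f'' ham
    (fun t ht => hfd t ⟨ht.1, ht.2.trans hmb⟩) i1 (fun t ht => hac t ⟨ht.1, ht.2.trans hmb⟩)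
  have A2 := aux_ibp m b (b - h * (b - a) / 2) f f' f'' hmb
    (fun t ht => hfd t ⟨ham.trans ht.1, ht.2⟩) i2 (fun t ht => by
      have ht' : t ∈ Set.Icc a b := ⟨ham.trans ht.1, ht.2⟩
      rw [hac t ht', hac m mm, add_assoc,
        intervalIntegral.integral_add_adjacent_intervals i1 (sub m mm t ht')])
  have hfc : ContinuousOn f (Set.Icc a b) := fun t ht => (hfd t ht).continuousAt.continuousWithinAt
  have fi : ∀ x ∈ Set.Icc a b, ∀ y ∈ Set.Icc a b, IntervalIntegrable f volume x y :=
    fun x hx y hy => (hfc.mono (Set.uIcc_subset_Icc hx hy)).intervalIntegrable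
  have s1 := intervalIntegral.integral_add_adjacent_intervals (fi a ma m mm) (fi m mm b mb)
  have s2 := intervalIntegral.integral_add_adjacent_intervals i1.abs i2.abs
  set M := max ((1 - h) ^ 2) (h ^ 2) with hM
  have hM1 : (1 - h) ^ 2 ≤ M := le_max_left _ _
  have hM2 : h ^ 2 ≤ M := le_max_right _ _
  have hL : 0 < b - a := by linarith
  -- a convex quadratic is bounded by its endpoint values
  have key : ∀ x : ℝ, 0 ≤ x → x ≤ (b - a) / 2 →
      (x - h * (b - a) / 2) ^ 2 ≤ (b - a) ^ 2 / 4 * M := by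
    intro x hx0 hx1
    have a1 := mul_le_mul_of_nonneg_left hM1 (by positivity : 0 ≤ (b - a) ^ 2 / 4)
    have a2 := mul_le_mul_of_nonneg_left hM2 (by positivity : 0 ≤ (b - a) ^ 2 / 4)
    have hh : 0 ≤ h * (b - a) := by positivity
    rcases le_total (h * (b - a) / 2) x with hc | hc
    · refine le_trans ?_ a1
      nlinarith
    · refine le_trans ?_ a2
      nlinarith
  have B1 := aux_bd a m (a + h * (b - a) / 2) ((b - a) ^ 2 / 4 * M) f'' ham i1 (fun t ht => by
    have := key (t - a) (by linarith [ht.1]) (by linarith [ht.2])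
    calc _ = (t - a - h * (b - a) / 2) ^ 2 := by ring
      _ ≤ _ := this)
  have B2 := aux_bd m b (b - h * (b - a) / 2) ((b - a) ^ 2 / 4 * M) f'' hmb i2 (fun t ht => by
    have := key (b - t) (by linarith [ht.2]) (by linarith [ht.1])
    calc _ = (b - t - h * (b - a) / 2) ^ 2 := by ring
      _ ≤ _ := this)
  rw [← hm, ← s1, ← s2]
  have E : (h - 1) * f m - (h / 2) * (f a + f b)
          + (h ^ 2 * (b - a) / 8) * (f' b - f' a)
          + (1 / (b - a)) * ((∫ t in a..m, f t) + ∫ t in m..b, f t)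
      = 1 / (2 * (b - a)) * ((∫ t in a..m, (t - (a + h * (b - a) / 2)) ^ 2 * f'' t)
          + ∫ t in m..b, (t - (b - h * (b - a) / 2)) ^ 2 * f'' t) := by
    rw [A1, A2, hm]
    field_simp
    ring
  rw [E, abs_mul, abs_of_pos (by positivity)]
  calc _ ≤ 1 / (2 * (b - a)) * ((b - a) ^ 2 / 4 * M * (∫ t in a..m, |f'' t|)
        + (b - a) ^ 2 / 4 * M * ∫ t in m..b, |f'' t|) := by
        apply mul_le_mul_of_nonneg_left _ (by positivity)
        exact (abs_add_le _ _).trans (add_le_add B1 B2)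
    _ = _ := by
        field_simp
        ring
end

section
/- If f″ is essentially bounded on [a,b], then | (1/2)·[α(b−x)(x−a−h(b−a)/2)² − β(x−a)(x−b+h(b−a)/2)²]·f′(x) − [α(b−x)(x−a−h(b−a)/2) − β(x−a)(x−b+h(b−a)/2)]·f(x) − (h(b−a)/2)·[α(b−x)f(a) + β(x−a)f(b)] + (h²(b−a)²/8)·[β(x−a)f′(b) − α(b−x)f′(a)] + [α(b−x) − β(x−a)]·F(x) + β(x−a) | ≤ (‖f″‖_∞/6)·[ α(b−x)·{(x−a−h(b−a)/2)³ + (h(b−a)/2)³} + β(x−a)·{(b−h(b−a)/2−x)³ + (h(b−a)/2)³} ], where ‖f″‖_∞ denotes the essential supremum of |f″| on [a,b]. -/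
open MeasureTheory intervalIntegral

theorem peano_piece (c d m K : ℝ) (f f' f'' : ℝ → ℝ) (hcd : c ≤ d)
    (hfd : ∀ t ∈ Set.Icc c d, HasDerivAt f (f' t) t)
    (hint : IntervalIntegrable f'' volume c d)
    (hac : ∀ t ∈ Set.Icc c d, f' t = f' c + ∫ u in c..t, f'' u)
    (hK : ∀ᵐ t, t ∈ Set.Icc c d → |f'' t| ≤ K) :
    |(d - m) ^ 2 / 2 * f' d - (c - m) ^ 2 / 2 * f' c - (d - m) * f d + (c - m) * f c
      + ∫ u in c..d, f u| ≤ K / 6 * ((d - m) ^ 3 + (m - c) ^ 3) := by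
  have hu : Set.uIcc c d = Set.Icc c d := Set.uIcc_of_le hcd
  set g : ℝ → ℝ := fun t => ∫ u in c..t, f'' u with hg
  have hgac : AbsolutelyContinuousOnInterval g c d :=
    hint.absolutelyContinuousOnInterval_intervalIntegral (by simp)
  have hqac : AbsolutelyContinuousOnInterval (fun t : ℝ => (t - m) ^ 2 / 2) c d :=
    ContDiffOn.absolutelyContinuousOnInterval (by fun_prop)
  have hq' : ∀ t : ℝ, HasDerivAt (fun t : ℝ => (t - m) ^ 2 / 2) (t - m) t := by
    intro t
    have := (((hasDerivAt_id t).sub_const m).pow 2).div_const 2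
    convert! this using 1
    simp
  have e1 := hqac.integral_mul_deriv_eq_deriv_mul hgac
  have e2 : ∫ t in c..d, (t - m) ^ 2 / 2 * deriv g t = ∫ t in c..d, (t - m) ^ 2 / 2 * f'' t := by
    apply intervalIntegral.integral_congr_ae
    filter_upwards [hint.ae_hasDerivAt_integral] with t ht htm
    rw [(ht (Set.uIoc_subset_uIcc htm) c (by simp)).deriv]
  have hgc : ContinuousOn g (Set.uIcc c d) := hgac.continuousOn
  have hf'c : ContinuousOn f' (Set.uIcc c d) := by
    refine (continuousOn_const.add hgc : ContinuousOn (fun t => f' c + g t) _).congr ?_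
    intro t ht
    exact hac t (hu ▸ ht)
  have e3 : ∫ t in c..d, (t - m) * f' t
      = (d - m) * f d - (c - m) * f c - ∫ t in c..d, (1 : ℝ) * f t :=
    intervalIntegral.integral_mul_deriv_eq_deriv_mul (u := fun t : ℝ => t - m) (u' := fun _ => 1)
      (fun t _ => (hasDerivAt_id t).sub_const m)
      (fun t ht => hfd t (hu ▸ ht)) (by simp) hf'c.intervalIntegrable
  have e4 : ∫ t in c..d, deriv (fun t : ℝ => (t - m) ^ 2 / 2) t * g t
      = (∫ t in c..d, (t - m) * f' t) - ∫ t in c..d, (t - m) * f' c := by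
    rw [← intervalIntegral.integral_sub]
    · apply intervalIntegral.integral_congr
      intro t ht
      simp only [(hq' t).deriv, hac t (hu ▸ ht)]
      ring
    · exact ((by fun_prop : ContinuousOn (fun t : ℝ => t - m) (Set.uIcc c d)).mul
        hf'c).intervalIntegrable
    · exact Continuous.intervalIntegrable (by fun_prop) _ _
  have e5 : ∫ t in c..d, (t - m) * f' c = ((d - m) ^ 2 / 2 - (c - m) ^ 2 / 2) * f' c := by
    rw [intervalIntegral.integral_mul_const, intervalIntegral.integral_eq_sub_of_hasDerivAt
      (fun t _ => hq' t) (Continuous.intervalIntegrable (by fun_prop) _ _)]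
  have e6 : ∫ t in c..d, K * ((t - m) ^ 2 / 2) = K / 6 * ((d - m) ^ 3 + (m - c) ^ 3) := by
    have h3 : ∀ t ∈ Set.uIcc c d,
        HasDerivAt (fun t : ℝ => K * ((t - m) ^ 3 / 6)) (K * ((t - m) ^ 2 / 2)) t := by
      intro t _
      have := ((((hasDerivAt_id t).sub_const m).pow 3).div_const 6).const_mul K
      convert! this using 1
      norm_num [id]
      left
      ring
    rw [intervalIntegral.integral_eq_sub_of_hasDerivAt h3
      (Continuous.intervalIntegrable (by fun_prop) _ _)]
    ring
  have b1 : ‖∫ t in c..d, (t - m) ^ 2 / 2 * f'' t‖ ≤ ∫ t in c..d, K * ((t - m) ^ 2 / 2) := by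
    apply intervalIntegral.norm_integral_le_of_norm_le hcd
    · filter_upwards [hK] with t ht htm
      have h1 := ht (Set.Ioc_subset_Icc_self htm)
      have h2 : 0 ≤ (t - m) ^ 2 / 2 := by positivity
      rw [Real.norm_eq_abs, abs_mul, abs_of_nonneg h2, mul_comm]
      exact mul_le_mul_of_nonneg_right h1 h2
    · exact Continuous.intervalIntegrable (by fun_prop) _ _
  rw [e6, Real.norm_eq_abs] at b1
  have hd : f' d = f' c + g d := hac d ⟨hcd, le_refl d⟩
  have hc : g c = 0 := by simp [hg]
  have e7 : ∫ t in c..d, (1 : ℝ) * f t = ∫ t in c..d, f t := by simp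
  convert b1 using 2
  rw [← e2, e1, e4, e5, e3, e7, hc, hd]
  ring

theorem stmt_17 (a b h α β x : ℝ) (f f' f'' : ℝ → ℝ)
    (hab : a < b)
    (hh : h ∈ Set.Icc (0 : ℝ) 1)
    (hα : 0 ≤ α) (hβ : 0 ≤ β) (hαβ : 0 < α + β)
    (hax : a < x) (hxb : x < b)
    (hx1 : a + h * (b - a) / 2 ≤ x) (hx2 : x ≤ b - h * (b - a) / 2)
    (hfpos : ∀ t ∈ Set.Icc a b, 0 ≤ f t)
    (hpdf : (∫ u in a..b, f u) = 1)
    (hfd : ∀ t ∈ Set.Icc a b, HasDerivAt f (f' t) t)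
    (hf''int : IntervalIntegrable f'' MeasureTheory.volume a b)
    (hac : ∀ t ∈ Set.Icc a b, f' t = f' a + ∫ u in a..t, f'' u)
    (K : ℝ) (hK : ∀ᵐ t ∂MeasureTheory.volume.restrict (Set.Icc a b), |f'' t| ≤ K)
    :
    |(1 / 2) * (α * (b - x) * (x - a - h * (b - a) / 2) ^ 2
          - β * (x - a) * (x - b + h * (b - a) / 2) ^ 2) * f' x
      - (α * (b - x) * (x - a - h * (b - a) / 2)
          - β * (x - a) * (x - b + h * (b - a) / 2)) * f x
      - (h * (b - a) / 2) * (α * (b - x) * f a + β * (x - a) * f b)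
      + (h ^ 2 * (b - a) ^ 2 / 8) * (β * (x - a) * f' b - α * (b - x) * f' a)
      + (α * (b - x) - β * (x - a)) * (∫ u in a..x, f u) + β * (x - a)| ≤
      (K / 6) *
        (α * (b - x) * ((x - a - h * (b - a) / 2) ^ 3 + (h * (b - a) / 2) ^ 3)
          + β * (x - a) * ((b - h * (b - a) / 2 - x) ^ 3 + (h * (b - a) / 2) ^ 3)) := by
  have hK' : ∀ᵐ t, t ∈ Set.Icc a b → |f'' t| ≤ K :=
    (ae_restrict_iff' measurableSet_Icc).1 hK
  have hu : Set.uIcc a b = Set.Icc a b := Set.uIcc_of_le hab.le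
  have i1 : IntervalIntegrable f'' volume a x :=
    hf''int.mono_set (Set.uIcc_subset_uIcc (by simp) (by rw [hu]; exact ⟨hax.le, hxb.le⟩))
  have i2 : IntervalIntegrable f'' volume x b :=
    hf''int.mono_set (Set.uIcc_subset_uIcc (by rw [hu]; exact ⟨hax.le, hxb.le⟩) (by simp))
  have hfc : ContinuousOn f (Set.uIcc a b) := by
    intro t ht
    exact (hfd t (hu ▸ ht)).continuousAt.continuousWithinAt
  have hfi := hfc.intervalIntegrable (μ := volume)
  have j1 : IntervalIntegrable f volume a x :=
    hfi.mono_set (Set.uIcc_subset_uIcc (by simp) (by rw [hu]; exact ⟨hax.le, hxb.le⟩))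
  have j2 : IntervalIntegrable f volume x b :=
    hfi.mono_set (Set.uIcc_subset_uIcc (by rw [hu]; exact ⟨hax.le, hxb.le⟩) (by simp))
  have hsum := intervalIntegral.integral_add_adjacent_intervals j1 j2
  rw [hpdf] at hsum
  have hF : ∫ u in x..b, f u = 1 - ∫ u in a..x, f u := by linarith
  have p1 := peano_piece a x (a + h * (b - a) / 2) K f f' f'' hax.le
    (fun t ht => hfd t ⟨ht.1, ht.2.trans hxb.le⟩) i1
    (fun t ht => hac t ⟨ht.1, ht.2.trans hxb.le⟩)
    (by filter_upwards [hK'] with t h1 ht using h1 ⟨ht.1, ht.2.trans hxb.le⟩)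
  have p2 := peano_piece x b (b - h * (b - a) / 2) K f f' f'' hxb.le
    (fun t ht => hfd t ⟨hax.le.trans ht.1, ht.2⟩) i2
    (fun t ht => by
      rw [hac t ⟨hax.le.trans ht.1, ht.2⟩, hac x ⟨hax.le, hxb.le⟩, add_assoc,
        intervalIntegral.integral_add_adjacent_intervals i1]
      exact i2.mono_set (Set.uIcc_subset_uIcc (by simp) (by
        rw [Set.uIcc_of_le hxb.le]; exact ht)))
    (by filter_upwards [hK'] with t h1 ht using h1 ⟨hax.le.trans ht.1, ht.2⟩)
  rw [hF] at p2
  have hA : 0 ≤ α * (b - x) := mul_nonneg hα (by linarith)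
  have hB : 0 ≤ β * (x - a) := mul_nonneg hβ (by linarith)
  rw [abs_le] at p1 p2 ⊢
  have q1 := mul_le_mul_of_nonneg_left p1.1 hA
  have q2 := mul_le_mul_of_nonneg_left p1.2 hA
  have q3 := mul_le_mul_of_nonneg_left p2.1 hB
  have q4 := mul_le_mul_of_nonneg_left p2.2 hB
  constructor
  · linarith
  · linarith
end

section
/- If f″ is essentially bounded on [a,b], then | (1/4)·[(b−x)(x−a−h(b−a)/2)² − (x−a)(x−b+h(b−a)/2)²]·f′(x) − (1/2)·[(b−x)(x−a−h(b−a)/2) − (x−a)(x−b+h(b−a)/2)]·f(x) − (h(b−a)/4)·[(b−x)f(a) + (x−a)f(b)] + (h²(b−a)²/16)·[(x−a)f′(b) − (b−x)f′(a)] + (1/2)·[(b−x) − (x−a)]·F(x) + (1/2)(x−a) | ≤ (‖f″‖_∞/12)·[ (b−x)·{(x−a−h(b−a)/2)³ + (h(b−a)/2)³} + (x−a)·{(b−h(b−a)/2−x)³ + (h(b−a)/2)³} ], where ‖f″‖_∞ denotes the essential supremum of |f″| on [a,b]. -/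
open MeasureTheory intervalIntegral

lemma peano_aux (c d α : ℝ) (g g' : ℝ → ℝ) (K : NNReal) (hcd : c ≤ d)
    (hg : ∀ t ∈ Set.Icc c d, HasDerivAt g (g' t) t)
    (hL : LipschitzOnWith K g' (Set.Icc c d)) :
    |(d - α) ^ 2 / 2 * g' d - (c - α) ^ 2 / 2 * g' c - ((d - α) * g d - (c - α) * g c)
      + ∫ u in c..d, g u| ≤ K / 6 * ((d - α) ^ 3 - (c - α) ^ 3) := by
  have hAC : AbsolutelyContinuousOnInterval g' c d := by
    apply LipschitzOnWith.absolutelyContinuousOnInterval (K := K)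
    rwa [Set.uIcc_of_le hcd]
  have hq : ∀ t : ℝ, HasDerivAt (fun t : ℝ => (t - α) ^ 2 / 2) (t - α) t := by
    intro t
    have := (((hasDerivAt_id t).sub_const α).pow 2).div_const 2
    refine this.congr_deriv ?_
    simp
  have hqC : AbsolutelyContinuousOnInterval (fun t : ℝ => (t - α) ^ 2 / 2) c d := by
    apply ContDiffOn.absolutelyContinuousOnInterval
    fun_prop
  have h1 := hqC.integral_mul_deriv_eq_deriv_mul hAC
  have hdq : deriv (fun t : ℝ => (t - α) ^ 2 / 2) = fun t => t - α := by
    funext t; exact (hq t).deriv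
  rw [hdq] at h1
  have hgc : ContinuousOn g' (Set.uIcc c d) := by
    rw [Set.uIcc_of_le hcd]; exact hL.continuousOn
  have h2 := integral_mul_deriv_eq_deriv_mul (a := c) (b := d) (u := fun t => t - α) (v := g)
    (u' := fun _ => 1) (v' := g') (fun t _ => (hasDerivAt_id t).sub_const α)
    (fun t ht => hg t (by rwa [Set.uIcc_of_le hcd] at ht)) (by simp) hgc.intervalIntegrable
  have h3 : ‖∫ t in c..d, (t - α) ^ 2 / 2 * deriv g' t‖ ≤ ∫ t in c..d, (t - α) ^ 2 / 2 * K := by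
    apply norm_integral_le_of_norm_le hcd
    · have : ∀ᵐ t : ℝ, t ≠ d := by simp [ae_iff]
      filter_upwards [this] with t htd ht
      rw [norm_mul, Real.norm_of_nonneg (by positivity)]
      gcongr
      exact norm_deriv_le_of_lipschitzOn
        (Icc_mem_nhds ht.1 (lt_of_le_of_ne ht.2 htd)) hL
    · apply Continuous.intervalIntegrable; fun_prop
  have h4 : ∫ t in c..d, (t - α) ^ 2 / 2 * K = K / 6 * ((d - α) ^ 3 - (c - α) ^ 3) := by
    rw [integral_eq_sub_of_hasDerivAt (f := fun t => (t - α) ^ 3 / 6 * K)]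
    · ring
    · intro t _
      have := ((((hasDerivAt_id t).sub_const α).pow 3).div_const 6).mul_const (K : ℝ)
      refine this.congr_deriv ?_
      simp only [id]
      push_cast
      ring
    · apply Continuous.intervalIntegrable; fun_prop
  rw [h4, h1, h2, Real.norm_eq_abs] at h3
  convert h3 using 2
  simp
  ring

theorem stmt_18 (a b h x : ℝ) (f f' f'' : ℝ → ℝ)
    (hab : a < b)
    (hh : h ∈ Set.Icc (0 : ℝ) 1)
    (hax : a < x) (hxb : x < b)
    (hx1 : a + h * (b - a) / 2 ≤ x) (hx2 : x ≤ b - h * (b - a) / 2)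
    (hfpos : ∀ t ∈ Set.Icc a b, 0 ≤ f t)
    (hpdf : (∫ u in a..b, f u) = 1)
    (hfd : ∀ t ∈ Set.Icc a b, HasDerivAt f (f' t) t)
    (hf''int : IntervalIntegrable f'' MeasureTheory.volume a b)
    (hac : ∀ t ∈ Set.Icc a b, f' t = f' a + ∫ u in a..t, f'' u)
    (K : ℝ) (hK : ∀ᵐ t ∂MeasureTheory.volume.restrict (Set.Icc a b), |f'' t| ≤ K)
    :
    |(1 / 4) * ((b - x) * (x - a - h * (b - a) / 2) ^ 2
          - (x - a) * (x - b + h * (b - a) / 2) ^ 2) * f' x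
      - (1 / 2) * ((b - x) * (x - a - h * (b - a) / 2)
          - (x - a) * (x - b + h * (b - a) / 2)) * f x
      - (h * (b - a) / 4) * ((b - x) * f a + (x - a) * f b)
      + (h ^ 2 * (b - a) ^ 2 / 16) * ((x - a) * f' b - (b - x) * f' a)
      + (1 / 2) * ((b - x) - (x - a)) * (∫ u in a..x, f u) + (1 / 2) * (x - a)| ≤
      (K / 12) *
        ((b - x) * ((x - a - h * (b - a) / 2) ^ 3 + (h * (b - a) / 2) ^ 3)
          + (x - a) * ((b - h * (b - a) / 2 - x) ^ 3 + (h * (b - a) / 2) ^ 3)) := by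
  have hae : ∀ᵐ t, t ∈ Set.Icc a b → |f'' t| ≤ K := (ae_restrict_iff' measurableSet_Icc).1 hK
  have hK0 : 0 ≤ K := by
    by_contra hneg
    have hz : ∀ᵐ t, t ∉ Set.Icc a b := by
      filter_upwards [hae] with t ht hm
      have := abs_nonneg (f'' t)
      linarith [ht hm]
    have : volume (Set.Icc a b) = 0 := by
      rw [ae_iff] at hz
      simpa only [not_not, Set.setOf_mem_eq] using hz
    simp at this
    linarith
  lift K to NNReal using hK0
  have hII : ∀ s ∈ Set.Icc a b, IntervalIntegrable f'' volume a s := fun s hs =>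
    hf''int.mono_set (by
      rw [Set.uIcc_of_le hs.1, Set.uIcc_of_le hab.le]; exact Set.Icc_subset_Icc_right hs.2)
  have hL : LipschitzOnWith K f' (Set.Icc a b) := by
    apply LipschitzOnWith.of_dist_le_mul
    intro s hs t ht
    rw [Real.dist_eq, Real.dist_eq, hac s hs, hac t ht, add_sub_add_left_eq_sub,
      integral_interval_sub_left (hII s hs) (hII t ht)]
    rw [← Real.norm_eq_abs]
    apply norm_integral_le_of_norm_le_const_ae
    filter_upwards [hae] with u hu hm
    apply hu
    have h5 := Set.uIoc_subset_uIcc hm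
    exact Set.uIcc_subset_Icc ht hs h5
  have hfc : ContinuousOn f (Set.Icc a b) := fun t ht => (hfd t ht).continuousAt.continuousWithinAt
  have s1 : Set.Icc a x ⊆ Set.Icc a b := Set.Icc_subset_Icc_right hxb.le
  have s2 : Set.Icc x b ⊆ Set.Icc a b := Set.Icc_subset_Icc_left hax.le
  have e1 := peano_aux a x (a + h * (b - a) / 2) f f' K hax.le
    (fun t ht => hfd t (s1 ht)) (hL.mono s1)
  have e2 := peano_aux x b (b - h * (b - a) / 2) f f' K hxb.le
    (fun t ht => hfd t (s2 ht)) (hL.mono s2)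
  have e3 : (∫ u in a..x, f u) + ∫ u in x..b, f u = 1 := by
    rw [← hpdf]
    apply integral_add_adjacent_intervals
    · apply ContinuousOn.intervalIntegrable
      rw [Set.uIcc_of_le hax.le]; exact hfc.mono s1
    · apply ContinuousOn.intervalIntegrable
      rw [Set.uIcc_of_le hxb.le]; exact hfc.mono s2
  have e4 : (∫ u in x..b, f u) = 1 - ∫ u in a..x, f u := by linarith
  rw [e4] at e2
  generalize (∫ u in a..x, f u) = F at *
  have p1 : 0 ≤ (b - x) / 2 := by linarith
  have p2 : 0 ≤ (x - a) / 2 := by linarith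
  have m1 := mul_le_mul_of_nonneg_left e1 p1
  have m2 := mul_le_mul_of_nonneg_left e2 p2
  rw [← abs_of_nonneg p1, ← abs_mul, abs_of_nonneg p1] at m1
  rw [← abs_of_nonneg p2, ← abs_mul, abs_of_nonneg p2] at m2
  refine le_trans (le_of_eq ?_) ((abs_add_le _ _).trans ((add_le_add m1 m2).trans (le_of_eq ?_)))
  · congr 1; ring
  · ring
end

section
/- If f″ is essentially bounded on [a,b], then for every α > 0, | α(b−x)·[ (1/2)(x−a−h(b−a)/2)²·f′(x) − (x−a−h(b−a)/2)·f(x) − (h(b−a)/2)·f(a) − (h²(b−a)²/8)·f′(a) + F(x) ] | ≤ α(b−x)·{(x−a−h(b−a)/2)³ + (h(b−a)/2)³}·‖f″‖_∞/6, where ‖f″‖_∞ denotes the essential supremum of |f″| on [a,b]. -/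
open MeasureTheory intervalIntegral


theorem stmt_19 (a b h x : ℝ) (f f' f'' : ℝ → ℝ)
    (hab : a < b)
    (hh : h ∈ Set.Icc (0 : ℝ) 1)
    (hax : a < x) (hxb : x < b)
    (hx1 : a + h * (b - a) / 2 ≤ x) (hx2 : x ≤ b - h * (b - a) / 2)
    (hfpos : ∀ t ∈ Set.Icc a b, 0 ≤ f t)
    (hpdf : (∫ u in a..b, f u) = 1)
    (hfd : ∀ t ∈ Set.Icc a b, HasDerivAt f (f' t) t)
    (hf''int : IntervalIntegrable f'' MeasureTheory.volume a b)
    (hac : ∀ t ∈ Set.Icc a b, f' t = f' a + ∫ u in a..t, f'' u)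
    (K : ℝ) (hK : ∀ᵐ t ∂MeasureTheory.volume.restrict (Set.Icc a b), |f'' t| ≤ K)
    :
    ∀ α : ℝ, 0 < α →
      |α * (b - x) * ((1 / 2) * (x - a - h * (b - a) / 2) ^ 2 * f' x
          - (x - a - h * (b - a) / 2) * f x
          - (h * (b - a) / 2) * f a
          - (h ^ 2 * (b - a) ^ 2 / 8) * f' a
          + ∫ u in a..x, f u)| ≤
        α * (b - x) * ((x - a - h * (b - a) / 2) ^ 3 + (h * (b - a) / 2) ^ 3) * K / 6 := by
  obtain ⟨hh0, hh1⟩ := hh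
  set c : ℝ := h * (b - a) / 2 with hc
  have hsub : Set.Icc a x ⊆ Set.Icc a b := Set.Icc_subset_Icc le_rfl hxb.le
  have hu : Set.uIcc a x = Set.Icc a x := Set.uIcc_of_le hax.le
  have hint : IntervalIntegrable f'' volume a x :=
    hf''int.mono_set (by rw [hu, Set.uIcc_of_le hab.le]; exact hsub)
  have hG := hint.absolutelyContinuousOnInterval_intervalIntegral (c := a) (by simp)
  have hpd : ∀ t : ℝ, HasDerivAt (fun t : ℝ => (t - a - c) ^ 2 / 2) (t - a - c) t := by
    intro t
    have h1 := ((((hasDerivAt_id t).sub_const a).sub_const c).pow 2).div_const 2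
    convert! h1 using 1
    simp
  have hp : AbsolutelyContinuousOnInterval (fun t : ℝ => (t - a - c) ^ 2 / 2) a x := by
    apply ContDiffOn.absolutelyContinuousOnInterval
    fun_prop
  have hparts := hp.integral_mul_deriv_eq_deriv_mul hG
  have hder : (∫ t in a..x, (t - a - c) ^ 2 / 2 * deriv (fun y => ∫ v in a..y, f'' v) t)
      = ∫ t in a..x, (t - a - c) ^ 2 / 2 * f'' t := by
    apply intervalIntegral.integral_congr_ae
    filter_upwards [hint.ae_hasDerivAt_integral] with t ht htm
    rw [(ht (Set.uIoc_subset_uIcc htm) a (by simp)).deriv]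
  have hf'c : ContinuousOn f' (Set.uIcc a x) := by
    have h1 : ContinuousOn (fun t => f' a + ∫ u in a..t, f'' u) (Set.uIcc a x) :=
      continuousOn_const.add hG.continuousOn
    refine h1.congr ?_
    intro t ht
    rw [hu] at ht
    exact hac t (hsub ht)
  have hf'i : IntervalIntegrable f' volume a x := hf'c.intervalIntegrable
  have hder2 : (∫ t in a..x, deriv (fun t : ℝ => (t - a - c) ^ 2 / 2) t * ∫ v in a..t, f'' v)
      = (∫ t in a..x, (t - a - c) * f' t) - ∫ t in a..x, (t - a - c) * f' a := by
    rw [← intervalIntegral.integral_sub]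
    · apply intervalIntegral.integral_congr
      intro t ht
      rw [hu] at ht
      have h1 := hac t (hsub ht)
      simp only [(hpd t).deriv]
      rw [h1]
      ring
    · exact ContinuousOn.intervalIntegrable (by fun_prop)
    · exact Continuous.intervalIntegrable (by fun_prop) _ _
  have hlin : (∫ t in a..x, (t - a - c) * f' a) = ((x - a - c) ^ 2 / 2 - c ^ 2 / 2) * f' a := by
    rw [intervalIntegral.integral_mul_const,
      intervalIntegral.integral_eq_sub_of_hasDerivAt (fun t _ => hpd t)
        (Continuous.intervalIntegrable (by fun_prop) _ _)]
    ring
  have hparts2 := intervalIntegral.integral_mul_deriv_eq_deriv_mul (a := a) (b := x)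
    (u := fun t : ℝ => t - a - c) (u' := fun _ => 1) (v := f) (v' := f')
    (fun t _ => ((hasDerivAt_id t).sub_const a).sub_const c)
    (fun t ht => hfd t (hsub (hu ▸ ht)))
    (Continuous.intervalIntegrable (by fun_prop) _ _) hf'i
  have hGx := hac x ⟨hax.le, hxb.le⟩
  have key : (1 / 2) * (x - a - c) ^ 2 * f' x - (x - a - c) * f x - c * f a
      - (h ^ 2 * (b - a) ^ 2 / 8) * f' a + (∫ u in a..x, f u)
      = ∫ t in a..x, (t - a - c) ^ 2 / 2 * f'' t := by
    rw [hder, hder2, hlin, hparts2] at hparts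
    simp only [one_mul, intervalIntegral.integral_same] at hparts
    have hI : (∫ u in a..x, f'' u) = f' x - f' a := by linarith
    rw [hparts, hI]
    have : h ^ 2 * (b - a) ^ 2 / 8 = c ^ 2 / 2 := by rw [hc]; ring
    rw [this]
    ring
  have hcube : (∫ t in a..x, (t - a - c) ^ 2 / 2 * K) = ((x - a - c) ^ 3 + c ^ 3) * K / 6 := by
    have hq : ∀ t : ℝ, HasDerivAt (fun t : ℝ => (t - a - c) ^ 3 / 6) ((t - a - c) ^ 2 / 2) t := by
      intro t
      have h1 := ((((hasDerivAt_id t).sub_const a).sub_const c).pow 3).div_const 6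
      convert! h1 using 1
      simp
      ring
    rw [intervalIntegral.integral_mul_const,
      intervalIntegral.integral_eq_sub_of_hasDerivAt (fun t _ => hq t)
        (Continuous.intervalIntegrable (by fun_prop) _ _)]
    ring
  have hbound : |∫ t in a..x, (t - a - c) ^ 2 / 2 * f'' t|
      ≤ ((x - a - c) ^ 3 + c ^ 3) * K / 6 := by
    rw [← hcube, ← Real.norm_eq_abs]
    apply intervalIntegral.norm_integral_le_of_norm_le hax.le
    · rw [ae_restrict_iff' measurableSet_Icc] at hK
      filter_upwards [hK] with t ht htm
      have h1 := ht ⟨htm.1.le, htm.2.trans hxb.le⟩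
      rw [Real.norm_eq_abs, abs_mul, abs_of_nonneg (by positivity : 0 ≤ (t - a - c) ^ 2 / 2)]
      gcongr
    · exact Continuous.intervalIntegrable (by fun_prop) _ _
  intro α hα
  have hpos : 0 ≤ α * (b - x) := mul_nonneg hα.le (by linarith)
  rw [key, abs_mul, abs_of_nonneg hpos]
  calc _ ≤ α * (b - x) * (((x - a - c) ^ 3 + c ^ 3) * K / 6) := by gcongr
    _ = _ := by ring
end
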